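/- arXiv:1902.10000 — 2 statements merged into one kernel-verified Lean document; each statement's English description precedes it below -/
import Mathlib

section
/- Fix x > 0. For a self-similar profile φ_ε define F_ε : [0,∞) → [0,∞) by F_ε(y) := ∫₀^{x−y} φ_ε(z) dz for 0 ≤ y ≤ x and F_ε(y) := 0 for y > x, and let F₀(y) := 1 − e^{−(x−y)} for 0 ≤ y ≤ x and F₀(y) := 0 for y > x. Then for every sequence ε_k → 0 and every sequence of normalised self-similar profiles φ_{ε_k} for K_{ε_k}, F_{ε_k} converges to F₀ uniformly on [0,∞), i.e. sup_{y ∈ [0,∞)} |F_{ε_k}(y) − F₀(y)| → 0 as k → ∞. Moreover the functions y ↦ ∫_{x−y}^∞ φ_{ε_k}(z) dz converge uniformly on [0,x] to y ↦ e^{−(x−y)}. -/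
open MeasureTheory Real Set Filter

noncomputable def weight (a b x : ℝ) : ℝ := if x ≤ 1 then x ^ a else x ^ b

noncomputable def Xnorm (a b : ℝ) (g : ℝ → ℝ) : ℝ :=
  ∫ x in Ioi (0:ℝ), |g x| * weight a b x

def MemX (a b : ℝ) (g : ℝ → ℝ) : Prop :=
  IntegrableOn (fun x => g x * weight a b x) (Ioi 0)

noncomputable def Kern (ε : ℝ) (W : ℝ → ℝ → ℝ) (x y : ℝ) : ℝ := 2 + ε * W x y

def GoodW (α : ℝ) (W : ℝ → ℝ → ℝ) : Prop :=
  ContinuousOn (fun p : ℝ × ℝ => W p.1 p.2) (Ioi 0 ×ˢ Ioi 0) ∧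
  (∀ x y : ℝ, 0 < x → 0 < y → W x y = W y x) ∧
  (∀ l x y : ℝ, 0 < l → 0 < x → 0 < y → W (l * x) (l * y) = W x y) ∧
  (∀ x y : ℝ, 0 < x → 0 < y → 0 ≤ W x y ∧ W x y ≤ (x / y) ^ α + (y / x) ^ α)

def IsProfile (K : ℝ → ℝ → ℝ) (φ : ℝ → ℝ) : Prop :=
  LocallyIntegrableOn φ (Ioi 0) ∧
  (∀ᵐ x ∂(volume.restrict (Ioi (0:ℝ))), 0 ≤ φ x) ∧
  IntegrableOn (fun x => x * φ x) (Ioi 0) ∧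
  (∀ᵐ x ∂(volume.restrict (Ioi (0:ℝ))),
    x ^ 2 * φ x = ∫ y in Ioo 0 x, ∫ z in Ioi (x - y), y * K y z * φ y * φ z)

def IsNormalised (φ : ℝ → ℝ) : Prop := ∫ x in Ioi (0:ℝ), x * φ x = 1

open scoped ENNReal

noncomputable def JJ (k : ℝ × ℝ → ℝ≥0∞) (μ : Measure ℝ) (x : ℝ) : ℝ≥0∞ :=
  ∫⁻ y, ∫⁻ z, (if y < x ∧ x < y + z then ENNReal.ofReal y * k (y, z) else 0) ∂μ ∂μ

lemma swap3 (ν μ : Measure ℝ) [SFinite ν] [SFinite μ] (G : ℝ × ℝ × ℝ → ℝ≥0∞) (hG : Measurable G) :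
    ∫⁻ x, ∫⁻ y, ∫⁻ z, G (x, y, z) ∂μ ∂μ ∂ν = ∫⁻ y, ∫⁻ z, ∫⁻ x, G (x, y, z) ∂ν ∂μ ∂μ := by
  rw [lintegral_lintegral_swap]
  · refine lintegral_congr fun y => ?_
    rw [lintegral_lintegral_swap]
    exact (hG.comp (by fun_prop : Measurable fun p : ℝ × ℝ => (p.1, y, p.2))).aemeasurable
  · have : Measurable fun p : (ℝ × ℝ) × ℝ => G (p.1.1, p.1.2, p.2) := hG.comp (by fun_prop)
    exact this.lintegral_prod_right'.aemeasurable

lemma measB (k : ℝ × ℝ → ℝ≥0∞) (hk : Measurable k) :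
    Measurable fun p : ℝ × ℝ × ℝ =>
      (if p.2.1 < p.1 ∧ p.1 < p.2.1 + p.2.2 then ENNReal.ofReal p.2.1 * k (p.2.1, p.2.2) else 0) := by
  refine Measurable.ite ?_ ?_ measurable_const
  · exact MeasurableSet.inter
      (measurableSet_lt (f := fun p : ℝ × ℝ × ℝ => p.2.1) (g := fun p => p.1) (by fun_prop) (by fun_prop))
      (measurableSet_lt (f := fun p : ℝ × ℝ × ℝ => p.1) (g := fun p => p.2.1 + p.2.2) (by fun_prop) (by fun_prop))
  · have : Measurable fun p : ℝ × ℝ × ℝ => k (p.2.1, p.2.2) := hk.comp (by fun_prop)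
    fun_prop

lemma JJ_weight (k : ℝ × ℝ → ℝ≥0∞) (hk : Measurable k) (μ : Measure ℝ) [SFinite μ]
    (w : ℝ → ℝ≥0∞) (hw : Measurable w) :
    ∫⁻ x, w x * JJ k μ x = ∫⁻ y, ∫⁻ z, ENNReal.ofReal y * k (y, z) *
      (∫⁻ x in Ioo y (y + z), w x) ∂μ ∂μ := by
  have hB := measB k hk
  have h1 : ∀ x, w x * JJ k μ x = ∫⁻ y, ∫⁻ z, (fun p : ℝ × ℝ × ℝ => w p.1 *
      (if p.2.1 < p.1 ∧ p.1 < p.2.1 + p.2.2 then ENNReal.ofReal p.2.1 * k (p.2.1, p.2.2) else 0))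
      (x, y, z) ∂μ ∂μ := by
    intro x
    unfold JJ
    have h2 : Measurable fun p : ℝ × ℝ => (if p.1 < x ∧ x < p.1 + p.2 then ENNReal.ofReal p.1 * k (p.1, p.2) else 0) :=
      hB.comp (by fun_prop : Measurable fun p : ℝ × ℝ => (x, p.1, p.2))
    rw [← lintegral_const_mul]
    · refine lintegral_congr fun y => ?_
      rw [← lintegral_const_mul]
      exact h2.comp (by fun_prop : Measurable fun z : ℝ => (y, z))
    · exact h2.lintegral_prod_right'
  rw [lintegral_congr h1]
  refine (swap3 volume μ (fun p : ℝ × ℝ × ℝ => w p.1 *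
      (if p.2.1 < p.1 ∧ p.1 < p.2.1 + p.2.2 then ENNReal.ofReal p.2.1 * k (p.2.1, p.2.2) else 0))
      (by fun_prop)).trans ?_
  refine lintegral_congr fun y => lintegral_congr fun z => ?_
  rw [← lintegral_const_mul _ hw, ← lintegral_indicator measurableSet_Ioo]
  refine lintegral_congr fun x => ?_
  simp only [indicator, mem_Ioo]
  split_ifs <;> simp [mul_comm]

lemma m1sq (μ : Measure ℝ) (C : ℝ≥0∞) (hC : C ≠ ⊤) (hm1 : ∫⁻ z, ENNReal.ofReal z ∂μ ≠ ⊤) :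
    ∫⁻ y, ∫⁻ z, C * ENNReal.ofReal y * ENNReal.ofReal z ∂μ ∂μ ≠ ⊤ := by
  have h : ∀ y, ∫⁻ z, C * ENNReal.ofReal y * ENNReal.ofReal z ∂μ =
      C * ENNReal.ofReal y * ∫⁻ z, ENNReal.ofReal z ∂μ := fun y =>
    lintegral_const_mul _ (by fun_prop)
  simp_rw [h]
  rw [lintegral_mul_const _ (by fun_prop), lintegral_const_mul _ (by fun_prop)]
  exact ENNReal.mul_ne_top (ENNReal.mul_ne_top hC hm1) hm1

lemma T_fin (k : ℝ × ℝ → ℝ≥0∞) (hk : Measurable k) (f : ℝ → ℝ≥0∞)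
    (hkb : ∀ c b : ℝ, 0 < c → ∃ C : ℝ≥0∞, C ≠ ⊤ ∧ ∀ y z, c ≤ y → y ≤ b → c ≤ z →
      k (y, z) ≤ C * ENNReal.ofReal z)
    (μ : Measure ℝ) [SFinite μ] (hμ : μ = volume.withDensity f) (hf0 : ∀ x ≤ 0, f x = 0)
    (hm1 : ∫⁻ z, ENNReal.ofReal z ∂μ ≠ ⊤)
    (hJ : ∀ᵐ x ∂(volume.restrict (Ioi (0:ℝ))), JJ k μ x = ⊤ → f x = 0) (c : ℝ) (hc : 0 < c) :
    ∫⁻ y, ∫⁻ z, (if y < c ∧ c ≤ z then ENNReal.ofReal y * k (y, z) else 0) ∂μ ∂μ ≠ ⊤ := by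
  by_cases h : ∃ x0, 0 < x0 ∧ x0 < c ∧ JJ k μ x0 ≠ ⊤
  · obtain ⟨x0, h0, hxc, hfin⟩ := h
    obtain ⟨C, hC, hb⟩ := hkb x0 c h0
    have key : ∫⁻ y, ∫⁻ z, (if y < c ∧ c ≤ z then ENNReal.ofReal y * k (y, z) else 0) ∂μ ∂μ ≤
        JJ k μ x0 + ∫⁻ y, ∫⁻ z, C * ENNReal.ofReal y * ENNReal.ofReal z ∂μ ∂μ := by
      have hmm : Measurable fun p : ℝ × ℝ => C * ENNReal.ofReal p.1 * ENNReal.ofReal p.2 := by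
        fun_prop
      unfold JJ
      rw [← lintegral_add_right _ hmm.lintegral_prod_right']
      refine lintegral_mono fun y => ?_
      simp only
      rw [← lintegral_add_right _ (by fun_prop)]
      refine lintegral_mono fun z => ?_
      simp only
      split_ifs with h1 h2 h2
      · exact le_self_add
      · rw [zero_add]
        by_cases hy : y ≤ 0
        · simp [ENNReal.ofReal_of_nonpos hy]
        have : x0 ≤ y := by
          by_contra hlt
          exact h2 ⟨by linarith, by linarith⟩
        calc _ ≤ ENNReal.ofReal y * (C * ENNReal.ofReal z) := by
              gcongr; exact hb y z this h1.1.le (by linarith)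
          _ = _ := by ring
      · exact zero_le
      · exact zero_le
    exact ne_top_of_le_ne_top (ENNReal.add_ne_top.2 ⟨hfin, m1sq μ C hC hm1⟩) key
  · push Not at h
    have hz : μ (Iio c) = 0 := by
      rw [hμ, withDensity_apply _ measurableSet_Iio]
      have : ∀ᵐ x ∂(volume.restrict (Iio c)), f x = 0 := by
        rw [ae_restrict_iff' measurableSet_Ioi] at hJ
        rw [ae_restrict_iff' measurableSet_Iio]
        filter_upwards [hJ] with x hx hxc
        by_cases h0 : x ≤ 0
        · exact hf0 x h0
        · push Not at h0
          exact hx h0 (h x h0 hxc)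
      rw [lintegral_congr_ae this]; simp
    have : ∀ᵐ y ∂μ, ∫⁻ z, (if y < c ∧ c ≤ z then ENNReal.ofReal y * k (y, z) else 0) ∂μ = 0 := by
      have : ∀ᵐ y ∂μ, ¬ y < c := by
        rw [ae_iff]; simp only [not_not]; exact hz
      filter_upwards [this] with y hy
      simp [hy]
    rw [lintegral_congr_ae this]
    simp

lemma J_fin (k : ℝ × ℝ → ℝ≥0∞) (hk : Measurable k) (hks : ∀ y z, k (y, z) = k (z, y))
    (f : ℝ → ℝ≥0∞)
    (hkb : ∀ c b : ℝ, 0 < c → ∃ C : ℝ≥0∞, C ≠ ⊤ ∧ ∀ y z, c ≤ y → y ≤ b → c ≤ z →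
      k (y, z) ≤ C * ENNReal.ofReal z)
    (μ : Measure ℝ) [SFinite μ] (hμ : μ = volume.withDensity f) (hf0 : ∀ x ≤ 0, f x = 0)
    (hm1 : ∫⁻ z, ENNReal.ofReal z ∂μ ≠ ⊤)
    (hJ : ∀ᵐ x ∂(volume.restrict (Ioi (0:ℝ))), JJ k μ x = ⊤ → f x = 0) :
    ∀ᵐ x ∂(volume.restrict (Ioi (0:ℝ))), JJ k μ x ≠ ⊤ := by
  have hJm : Measurable (JJ k μ) := by
    have : Measurable fun p : (ℝ × ℝ) × ℝ =>
      (if p.1.2 < p.1.1 ∧ p.1.1 < p.1.2 + p.2 then ENNReal.ofReal p.1.2 * k (p.1.2, p.2) else 0) :=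
      (measB k hk).comp (by fun_prop : Measurable fun p : (ℝ × ℝ) × ℝ => (p.1.1, p.1.2, p.2))
    exact this.lintegral_prod_right'.lintegral_prod_right'
  have main : ∀ a b : ℝ, 0 < a → a < b → ∫⁻ x in Icc a b, JJ k μ x ≠ ⊤ := by
    intro a b ha hab
    set c := a / 2 with hc
    have hc0 : 0 < c := by positivity
    have hT := T_fin k hk f hkb μ hμ hf0 hm1 hJ c hc0
    obtain ⟨C, hC, hb⟩ := hkb c b hc0
    set t : ℝ × ℝ → ℝ≥0∞ := fun p => if p.1 < c ∧ c ≤ p.2 then ENNReal.ofReal p.1 * k (p.1, p.2) else 0 with ht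
    have htm : Measurable t := by
      refine Measurable.ite ?_ ?_ measurable_const
      · exact MeasurableSet.inter
          (measurableSet_lt (f := fun p : ℝ × ℝ => p.1) (g := fun _ => c) (by fun_prop) (by fun_prop))
          (measurableSet_le (f := fun _ : ℝ × ℝ => c) (g := fun p => p.2) (by fun_prop) (by fun_prop))
      · fun_prop
    have htm' : Measurable fun p : ℝ × ℝ => t (p.2, p.1) := htm.comp (by fun_prop)
    have e1 : ∫⁻ x in Icc a b, JJ k μ x = ∫⁻ x, (Icc a b).indicator 1 x * JJ k μ x := by
      rw [← lintegral_indicator measurableSet_Icc]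
      refine lintegral_congr fun x => ?_
      simp only [indicator]; split_ifs <;> simp
    rw [e1, JJ_weight k hk μ _ (measurable_one.indicator measurableSet_Icc)]
    have hT2 : ∫⁻ y, ∫⁻ z, t (z, y) ∂μ ∂μ ≠ ⊤ := by
      rw [lintegral_lintegral_swap htm'.aemeasurable]; exact hT
    have hT3 := m1sq μ C hC hm1
    have hfinal : ENNReal.ofReal b * (∫⁻ y, ∫⁻ z, t (y, z) ∂μ ∂μ) + ENNReal.ofReal b *
      (∫⁻ y, ∫⁻ z, t (z, y) ∂μ ∂μ) + ENNReal.ofReal b *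
      (∫⁻ y, ∫⁻ z, C * ENNReal.ofReal y * ENNReal.ofReal z ∂μ ∂μ) ≠ ⊤ := by
      have := ENNReal.ofReal_ne_top (r := b)
      exact ENNReal.add_ne_top.2 ⟨ENNReal.add_ne_top.2 ⟨ENNReal.mul_ne_top this hT,
        ENNReal.mul_ne_top this hT2⟩, ENNReal.mul_ne_top this hT3⟩
    refine ne_top_of_le_ne_top hfinal ?_
    have hmm : Measurable fun p : ℝ × ℝ => C * ENNReal.ofReal p.1 * ENNReal.ofReal p.2 := by
      fun_prop
    rw [← mul_add, ← mul_add, ← lintegral_add_right _ htm'.lintegral_prod_right',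
      ← lintegral_add_right _ hmm.lintegral_prod_right',
      ← lintegral_const_mul' _ _ ENNReal.ofReal_ne_top]
    refine lintegral_mono fun y => ?_
    simp only
    rw [← lintegral_add_right _ (by fun_prop), ← lintegral_add_right _ (by fun_prop),
      ← lintegral_const_mul' _ _ ENNReal.ofReal_ne_top]
    refine lintegral_mono fun z => ?_
    simp only
    rw [lintegral_indicator_one measurableSet_Icc, Measure.restrict_apply measurableSet_Icc]
    rcases (Icc a b ∩ Ioo y (y+z)).eq_empty_or_nonempty with he | ⟨x, hx1, hx2⟩
    · simp [he]
    simp only [mem_Icc, mem_Ioo] at hx1 hx2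
    have vb : volume (Icc a b ∩ Ioo y (y+z)) ≤ ENNReal.ofReal b := by
      refine (measure_mono inter_subset_left).trans ?_
      rw [Real.volume_Icc]; exact ENNReal.ofReal_le_ofReal (by linarith)
    have vz : volume (Icc a b ∩ Ioo y (y+z)) ≤ ENNReal.ofReal z := by
      refine (measure_mono inter_subset_right).trans ?_
      rw [Real.volume_Ioo]; exact ENNReal.ofReal_le_ofReal (by linarith)
    by_cases hyc : y < c
    · have hz : c ≤ z := by linarith
      have : t (y, z) = ENNReal.ofReal y * k (y, z) := by simp [ht, hyc, hz]
      rw [mul_comm]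
      refine mul_le_mul' vb ?_
      rw [add_assoc, this]; exact le_self_add
    · push Not at hyc
      by_cases hzc : z < c
      · have : t (z, y) = ENNReal.ofReal z * k (z, y) := by simp [ht, hyc, hzc]
        calc _ ≤ ENNReal.ofReal b * k (z, y) * ENNReal.ofReal z := by
              rw [hks y z]
              gcongr; linarith
          _ = ENNReal.ofReal b * t (z, y) := by rw [this]; ring
          _ ≤ _ := by
            gcongr
            rw [add_right_comm, add_comm]; exact le_self_add
      · push Not at hzc
        calc _ ≤ ENNReal.ofReal y * (C * ENNReal.ofReal z) * ENNReal.ofReal b := by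
              gcongr; exact hb y z hyc (by linarith) hzc
          _ = ENNReal.ofReal b * (C * ENNReal.ofReal y * ENNReal.ofReal z) := by ring
          _ ≤ _ := by
            gcongr
            exact le_add_self
  have hU : Ioi (0:ℝ) ⊆ ⋃ n : ℕ, Icc (1 / ((n:ℝ) + 2)) (n + 2) := by
    intro x hx
    obtain ⟨n, hn⟩ := exists_nat_gt (max x (1/x))
    refine mem_iUnion.2 ⟨n, ?_, ?_⟩
    · have h1 : 1 / x < n := (le_max_right _ _).trans_lt hn
      have hx' : (0:ℝ) < x := hx
      rw [div_le_iff₀ (by positivity)]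
      rw [div_lt_iff₀ hx'] at h1
      nlinarith
    · have := (le_max_left x (1/x)).trans_lt hn
      linarith
  refine ae_restrict_of_ae_restrict_of_subset hU ?_
  rw [ae_restrict_iUnion_iff]
  intro n
  have hn : (0:ℝ) ≤ n := Nat.cast_nonneg n
  have := main (1 / ((n:ℝ) + 2)) (n + 2) (by positivity) (by
    rw [div_lt_iff₀ (by positivity)]; nlinarith)
  filter_upwards [ae_lt_top hJm this] with x hx using hx.ne

lemma exp_num_nonneg (t : ℝ) (_ht : 0 ≤ t) : 0 ≤ 1 - exp (-t) - t * exp (-t) := by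
  have h1 : t + 1 ≤ exp t := Real.add_one_le_exp t
  have h2 : exp (-t) * exp t = 1 := by rw [← Real.exp_add]; simp
  nlinarith [Real.exp_pos (-t)]

noncomputable def pf (q x : ℝ) : ℝ := (1 - exp (-(q * x))) / x

noncomputable def wf (q x : ℝ) : ℝ := (1 - exp (-(q * x)) - q * x * exp (-(q * x))) / x ^ 2

lemma wf_meas (q : ℝ) : Measurable (wf q) := by unfold wf; fun_prop

lemma pf_deriv (q x : ℝ) (hx : 0 < x) : HasDerivAt (pf q) (-(wf q x)) x := by
  have h1 : HasDerivAt (fun x => 1 - exp (-(q * x))) (q * exp (-(q * x))) x := by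
    have := (((hasDerivAt_id x).const_mul q).neg.exp).const_sub 1
    exact this.congr_deriv (by simp; ring)
  have := h1.div (hasDerivAt_id x) hx.ne'
  refine this.congr_deriv ?_
  unfold wf
  simp
  ring

lemma wf_int (q : ℝ) (hq : 0 < q) (y z : ℝ) (hy : 0 < y) (hz : 0 < z) :
    ∫⁻ x in Ioo y (y + z), ENNReal.ofReal (wf q x) = ENNReal.ofReal (pf q y - pf q (y + z)) := by
  have hyz : y ≤ y + z := by linarith
  have hpos : ∀ x ∈ uIcc y (y+z), 0 < x := by
    intro x hx; rw [uIcc_of_le hyz] at hx; linarith [hx.1]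
  have hc : ContinuousOn (wf q) (uIcc y (y+z)) := by
    unfold wf
    refine ContinuousOn.div (by fun_prop) (by fun_prop) fun x hx => ?_
    have := hpos x hx; positivity
  have hI : IntervalIntegrable (wf q) volume y (y+z) := hc.intervalIntegrable
  have h1 : ∫ x in y..(y+z), wf q x = pf q y - pf q (y + z) := by
    have h := intervalIntegral.integral_eq_sub_of_hasDerivAt (f := fun x => -(pf q x)) (f' := wf q)
      (a := y) (b := y + z)
      (fun x hx => (pf_deriv q x (hpos x hx)).neg.congr_deriv (neg_neg _)) hI
    rw [h]; ring
  rw [← h1, intervalIntegral.integral_of_le hyz, integral_Ioc_eq_integral_Ioo,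
    ofReal_integral_eq_lintegral_ofReal]
  · exact ((intervalIntegrable_iff_integrableOn_Ioc_of_le hyz).1 hI).mono_set Ioo_subset_Ioc_self
  · rw [EventuallyLE, ae_restrict_iff' measurableSet_Ioo]
    filter_upwards with x hx
    have : 0 < x := by linarith [hx.1]
    have := exp_num_nonneg (q * x) (by positivity)
    simp only [Pi.zero_apply]
    unfold wf
    positivity

lemma pf_anti (q : ℝ) (hq : 0 < q) (y z : ℝ) (hy : 0 < y) (hz : 0 < z) :
    0 ≤ pf q y - pf q (y + z) := by
  have : AntitoneOn (pf q) (Ioi 0) := by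
    refine antitoneOn_of_deriv_nonpos (convex_Ioi 0) ?_ ?_ ?_
    · exact fun x hx => (pf_deriv q x hx).continuousAt.continuousWithinAt
    · rw [interior_Ioi]
      exact fun x hx => (pf_deriv q x hx).differentiableAt.differentiableWithinAt
    · rw [interior_Ioi]
      intro x hx
      have hx : 0 < x := hx
      rw [(pf_deriv q x hx).deriv]
      have := exp_num_nonneg (q * x) (by positivity)
      simp only [Left.neg_nonpos_iff]
      unfold wf
      positivity
  have := this (a := y) hy (b := y + z) (by simp; linarith) (by linarith)
  linarith

lemma identity (k : ℝ × ℝ → ℝ≥0∞) (hk : Measurable k) (hks : ∀ y z, k (y, z) = k (z, y))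
    (hk0 : ∀ y z, ¬ (0 < y ∧ 0 < z) → k (y, z) = 0)
    (f : ℝ → ℝ≥0∞) (hf : Measurable f)
    (μ : Measure ℝ) [SFinite μ] (hμ : μ = volume.withDensity f) (hf0 : ∀ x ≤ 0, f x = 0)
    (hE : ∀ᵐ x ∂(volume.restrict (Ioi (0:ℝ))), ENNReal.ofReal (x ^ 2) * f x = JJ k μ x)
    (q : ℝ) (hq : 0 < q) :
    2 * ∫⁻ x, ENNReal.ofReal (1 - exp (-(q * x)) - q * x * exp (-(q * x))) ∂μ =
      ∫⁻ y, ∫⁻ z, k (y, z) * ENNReal.ofReal (1 - exp (-(q * y))) *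
        ENNReal.ofReal (1 - exp (-(q * z))) ∂μ ∂μ := by
  set A : ℝ × ℝ → ℝ≥0∞ := fun p => ENNReal.ofReal p.1 * k (p.1, p.2) *
    ENNReal.ofReal (pf q p.1 - pf q (p.1 + p.2)) with hA
  have hAm : Measurable A := by
    have : Measurable (pf q) := by unfold pf; fun_prop
    fun_prop
  have hAm' : Measurable fun p : ℝ × ℝ => A (p.2, p.1) := hAm.comp (by fun_prop)
  have h1 : ∫⁻ x, ENNReal.ofReal (1 - exp (-(q * x)) - q * x * exp (-(q * x))) ∂μ =
      ∫⁻ y, ∫⁻ z, A (y, z) ∂μ ∂μ := by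
    have e1 : ∫⁻ x, ENNReal.ofReal (1 - exp (-(q * x)) - q * x * exp (-(q * x))) ∂μ =
        ∫⁻ x, ENNReal.ofReal (wf q x) * JJ k μ x := by
      conv_lhs => rw [hμ]
      rw [lintegral_withDensity_eq_lintegral_mul _ hf (by fun_prop)]
      refine lintegral_congr_ae ?_
      rw [ae_restrict_iff' measurableSet_Ioi] at hE
      filter_upwards [hE] with x hx
      by_cases h0 : 0 < x
      · rw [← hx h0, ← mul_assoc, ← ENNReal.ofReal_mul']
        · simp only [Pi.mul_apply, wf]
          rw [div_mul_cancel₀ _ (by positivity), mul_comm]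
        · positivity
      · push Not at h0
        have : JJ k μ x = 0 := by
          unfold JJ
          have : ∀ y z : ℝ, (if y < x ∧ x < y + z then ENNReal.ofReal y * k (y, z) else 0) = 0 := by
            intro y z
            split_ifs with h
            · rw [ENNReal.ofReal_of_nonpos (by linarith)]; simp
            · rfl
          simp [this]
        simp [this, hf0 x h0]
    rw [e1, JJ_weight k hk μ _ (wf_meas q).ennreal_ofReal]
    refine lintegral_congr fun y => lintegral_congr fun z => ?_
    by_cases h : 0 < y ∧ 0 < z
    · rw [wf_int q hq y z h.1 h.2]
    · simp [hA, hk0 y z h]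
  have h2 : ∫⁻ y, ∫⁻ z, A (y, z) ∂μ ∂μ = ∫⁻ y, ∫⁻ z, A (z, y) ∂μ ∂μ :=
    lintegral_lintegral_swap hAm.aemeasurable
  rw [two_mul]
  nth_rw 2 [h1]
  rw [h1, h2, ← h2]
  nth_rw 2 [h2]
  rw [← lintegral_add_right _ hAm'.lintegral_prod_right']
  refine lintegral_congr fun y => ?_
  rw [← lintegral_add_right _ (by fun_prop)]
  refine lintegral_congr fun z => ?_
  by_cases h : 0 < y ∧ 0 < z
  · obtain ⟨hy, hz⟩ := h
    have a1 := pf_anti q hq y z hy hz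
    have a2 := pf_anti q hq z y hz hy
    simp only [hA]
    rw [hks z y, mul_right_comm, ← ENNReal.ofReal_mul hy.le, mul_right_comm (ENNReal.ofReal z),
      ← ENNReal.ofReal_mul hz.le, ← add_mul, ← ENNReal.ofReal_add (by positivity) (by positivity),
      mul_assoc, ← ENNReal.ofReal_mul, mul_comm]
    · congr 2
      rw [add_comm z y]
      unfold pf
      have : exp (-(q * (y + z))) = exp (-(q * y)) * exp (-(q * z)) := by
        rw [← Real.exp_add]; ring_nf
      rw [this]
      field_simp
      ring
    · rw [sub_nonneg, Real.exp_le_one_iff]; nlinarith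
  · have h' : ¬ (0 < z ∧ 0 < y) := fun hh => h ⟨hh.2, hh.1⟩
    simp [hA, hk0 y z h, hk0 z y h']

noncomputable def kk (ε : ℝ) (W : ℝ → ℝ → ℝ) : ℝ × ℝ → ℝ≥0∞ :=
  (Ioi (0:ℝ) ×ˢ Ioi (0:ℝ)).indicator (fun p => ENNReal.ofReal (Kern ε W p.1 p.2))

lemma kk_meas (α ε : ℝ) (W : ℝ → ℝ → ℝ) (hW : GoodW α W) : Measurable (kk ε W) := by
  have hc : ContinuousOn (fun p : ℝ × ℝ => ENNReal.ofReal (Kern ε W p.1 p.2)) (Ioi 0 ×ˢ Ioi 0) := by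
    refine ENNReal.continuous_ofReal.comp_continuousOn ?_
    unfold Kern
    exact continuousOn_const.add (continuousOn_const.mul hW.1)
  have hm : MeasurableSet (Ioi (0:ℝ) ×ˢ Ioi (0:ℝ)) := measurableSet_Ioi.prod measurableSet_Ioi
  unfold kk
  rw [← piecewise_eq_indicator]
  exact hc.measurable_piecewise continuousOn_const hm

lemma kk_eq (ε : ℝ) (W : ℝ → ℝ → ℝ) (y z : ℝ) (hy : 0 < y) (hz : 0 < z) :
    kk ε W (y, z) = ENNReal.ofReal (Kern ε W y z) := by
  unfold kk
  rw [indicator_of_mem]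
  exact ⟨hy, hz⟩

lemma kk_zero (ε : ℝ) (W : ℝ → ℝ → ℝ) (y z : ℝ) (h : ¬ (0 < y ∧ 0 < z)) :
    kk ε W (y, z) = 0 := by
  unfold kk
  rw [indicator_of_notMem]
  exact h

lemma kk_ne_top (ε : ℝ) (W : ℝ → ℝ → ℝ) (p : ℝ × ℝ) : kk ε W p ≠ ⊤ := by
  unfold kk indicator
  split_ifs <;> simp

lemma kk_symm (α ε : ℝ) (W : ℝ → ℝ → ℝ) (hW : GoodW α W) (y z : ℝ) :
    kk ε W (y, z) = kk ε W (z, y) := by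
  by_cases h : 0 < y ∧ 0 < z
  · rw [kk_eq _ _ _ _ h.1 h.2, kk_eq _ _ _ _ h.2 h.1]
    unfold Kern
    rw [hW.2.1 y z h.1 h.2]
  · rw [kk_zero _ _ _ _ h, kk_zero _ _ _ _ (fun hh => h ⟨hh.2, hh.1⟩)]

lemma kk_bound (α : ℝ) (hα : α ∈ Ioo (0:ℝ) 1) (ε : ℝ) (hε : 0 < ε) (W : ℝ → ℝ → ℝ)
    (hW : GoodW α W) (c b : ℝ) (hc : 0 < c) :
    ∃ C : ℝ≥0∞, C ≠ ⊤ ∧ ∀ y z, c ≤ y → y ≤ b → c ≤ z → kk ε W (y, z) ≤ C * ENNReal.ofReal z := by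
  refine ⟨ENNReal.ofReal ((2 + ε * ((b / c) ^ α + 1)) / c), ENNReal.ofReal_ne_top, ?_⟩
  intro y z hy hyb hz
  have hy0 : 0 < y := by linarith
  have hz0 : 0 < z := by linarith
  have hb0 : 0 < b := by linarith
  rw [kk_eq _ _ _ _ hy0 hz0, ← ENNReal.ofReal_mul (by positivity)]
  refine ENNReal.ofReal_le_ofReal ?_
  have h1 := (hW.2.2.2 y z hy0 hz0).2
  have h2 : (y / z) ^ α ≤ (b / c) ^ α := by
    apply Real.rpow_le_rpow (by positivity) _ hα.1.le
    gcongr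
  have hzc : 1 ≤ z / c := by rw [le_div_iff₀ hc]; linarith
  have h3 : (z / y) ^ α ≤ z / c := by
    calc (z / y) ^ α ≤ (z / c) ^ α := by
          apply Real.rpow_le_rpow (by positivity) _ hα.1.le
          gcongr
      _ ≤ (z / c) ^ (1:ℝ) := Real.rpow_le_rpow_of_exponent_le hzc hα.2.le
      _ = _ := Real.rpow_one _
  have h4 : (0:ℝ) ≤ (b / c) ^ α := by positivity
  unfold Kern
  calc 2 + ε * W y z ≤ 2 * (z / c) + ε * ((b / c) ^ α * (z / c) + z / c) := by
        have : W y z ≤ (b / c) ^ α * (z / c) + z / c := by nlinarith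
        have := mul_le_mul_of_nonneg_left this hε.le
        linarith
    _ = _ := by ring

lemma inner_eq (α : ℝ) (hα : α ∈ Ioo (0:ℝ) 1) (ε : ℝ) (hε : 0 < ε) (W : ℝ → ℝ → ℝ)
    (hW : GoodW α W) (φ g : ℝ → ℝ) (hgm : Measurable g) (hg0 : ∀ x, 0 ≤ g x)
    (hφg : ∀ᵐ x ∂(volume.restrict (Ioi (0:ℝ))), φ x = g x)
    (μ : Measure ℝ) (hμ : μ = volume.withDensity (fun x => ENNReal.ofReal (g x)))
    (hm1 : ∫⁻ z, ENNReal.ofReal z ∂μ ≠ ⊤) (x y : ℝ) (hy : 0 < y) (hyx : y < x) (hyg : φ y = g y) :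
    ENNReal.ofReal (g y) * ∫⁻ z, (if y < x ∧ x < y + z then ENNReal.ofReal y * kk ε W (y, z) else 0) ∂μ < ⊤ ∧ 
    ∫ z in Ioi (x - y), y * Kern ε W y z * φ y * φ z = 
    (ENNReal.ofReal (g y) * ∫⁻ z, (if y < x ∧ x < y + z then ENNReal.ofReal y * kk ε W (y, z) else 0) ∂μ).toReal := by
  have hkm := kk_meas α ε W hW
  have hkm' : Measurable fun z => kk ε W (y, z) := hkm.comp (by fun_prop)
  have hxy : 0 < x - y := by linarith
  have hite : Measurable fun z => (if y < x ∧ x < y + z then ENNReal.ofReal y * kk ε W (y, z) else 0) :=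
    (measB _ hkm).comp (by fun_prop : Measurable fun z : ℝ => (x, y, z))
  have hfin : ∫⁻ z, (if y < x ∧ x < y + z then ENNReal.ofReal y * kk ε W (y, z) else 0) ∂μ ≠ ⊤ := by
    obtain ⟨C, hC, hb⟩ := kk_bound α hα ε hε W hW (min y (x - y)) y (by positivity)
    have : ∫⁻ z, (if y < x ∧ x < y + z then ENNReal.ofReal y * kk ε W (y, z) else 0) ∂μ ≤
       ∫⁻ z, ENNReal.ofReal y * C * ENNReal.ofReal z ∂μ := by
      refine lintegral_mono fun z => ?_
      simp only
      split_ifs with h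
      · rw [mul_assoc]
        gcongr
        exact hb y z (min_le_left _ _) le_rfl ((min_le_right _ _).trans (by linarith))
      · exact zero_le
    refine ne_top_of_le_ne_top ?_ this
    rw [lintegral_const_mul _ (by fun_prop)]
    exact ENNReal.mul_ne_top (ENNReal.mul_ne_top ENNReal.ofReal_ne_top hC) hm1
  refine ⟨(ENNReal.mul_ne_top ENNReal.ofReal_ne_top hfin).lt_top, ?_⟩
  have e1 : ENNReal.ofReal (g y) * ∫⁻ z, (if y < x ∧ x < y + z then ENNReal.ofReal y * kk ε W (y, z) else 0) ∂μ
      = ∫⁻ z in Ioi (x - y), ENNReal.ofReal (g y) * (ENNReal.ofReal y * kk ε W (y, z) * ENNReal.ofReal (g z)) := by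
    rw [lintegral_const_mul' _ _ ENNReal.ofReal_ne_top]
    congr 1
    rw [hμ, lintegral_withDensity_eq_lintegral_mul _ (by fun_prop) hite, ← lintegral_indicator measurableSet_Ioi]
    refine lintegral_congr fun z => ?_
    by_cases h : x < y + z
    · have h' : x - y < z := by linarith
      simp [h, h', hyx, mul_comm]
    · have h' : ¬ x - y < z := by intro; apply h; linarith
      simp [h, h']
  rw [e1, ← integral_toReal]
  · refine integral_congr_ae ?_
    have := ae_restrict_of_ae_restrict_of_subset (Ioi_subset_Ioi hxy.le) hφg
    filter_upwards [this, ae_restrict_mem measurableSet_Ioi] with z hz hz'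
    have hz0 : 0 < z := lt_trans hxy hz'
    have hK : 0 ≤ Kern ε W y z := by
      have := (hW.2.2.2 y z hy hz0).1
      unfold Kern; positivity
    rw [kk_eq _ _ _ _ hy hz0, hz, hyg]
    simp only [ENNReal.toReal_mul, ENNReal.toReal_ofReal (hg0 _), ENNReal.toReal_ofReal hy.le,
      ENNReal.toReal_ofReal hK]
    ring
  · exact (by fun_prop : Measurable _).aemeasurable
  · filter_upwards with z
    exact (ENNReal.mul_ne_top ENNReal.ofReal_ne_top (ENNReal.mul_ne_top (ENNReal.mul_ne_top
      ENNReal.ofReal_ne_top (kk_ne_top _ _ _)) ENNReal.ofReal_ne_top)).lt_top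

lemma outer_eq (α : ℝ) (hα : α ∈ Ioo (0:ℝ) 1) (ε : ℝ) (hε : 0 < ε) (W : ℝ → ℝ → ℝ)
    (hW : GoodW α W) (φ g : ℝ → ℝ) (hgm : Measurable g) (hg0 : ∀ x, 0 ≤ g x)
    (hφg : ∀ᵐ x ∂(volume.restrict (Ioi (0:ℝ))), φ x = g x)
    (μ : Measure ℝ) [SFinite μ] (hμ : μ = volume.withDensity (fun x => ENNReal.ofReal (g x)))
    (hm1 : ∫⁻ z, ENNReal.ofReal z ∂μ ≠ ⊤) (x : ℝ) :
    ∫ y in Ioo 0 x, ∫ z in Ioi (x - y), y * Kern ε W y z * φ y * φ z = (JJ (kk ε W) μ x).toReal := by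
  have hkm := kk_meas α ε W hW
  have hite : Measurable fun p : ℝ × ℝ => (if p.1 < x ∧ x < p.1 + p.2 then ENNReal.ofReal p.1 * kk ε W (p.1, p.2) else 0) :=
    (measB _ hkm).comp (by fun_prop : Measurable fun p : ℝ × ℝ => (x, p.1, p.2))
  have hI := hite.lintegral_prod_right' (ν := μ)
  have hφg' := ae_restrict_of_ae_restrict_of_subset (show Ioo 0 x ⊆ Ioi 0 from fun _ h => h.1) hφg
  have e1 : JJ (kk ε W) μ x = ∫⁻ y in Ioo 0 x, ENNReal.ofReal (g y) * ∫⁻ z, (if y < x ∧ x < y + z then ENNReal.ofReal y * kk ε W (y, z) else 0) ∂μ := by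
    unfold JJ
    have e0 := lintegral_withDensity_eq_lintegral_mul volume
      (by fun_prop : Measurable fun y => ENNReal.ofReal (g y)) hI
    rw [← hμ] at e0
    rw [e0, ← lintegral_indicator measurableSet_Ioo]
    refine lintegral_congr fun y => ?_
    simp only [indicator, Pi.mul_apply]
    split_ifs with h
    · rfl
    · simp only [mem_Ioo, not_and_or, not_lt] at h
      rcases h with h | h
      · simp [ENNReal.ofReal_of_nonpos h]
      · simp [not_lt.2 h]
  rw [e1, ← integral_toReal]
  · refine integral_congr_ae ?_
    filter_upwards [hφg', ae_restrict_mem measurableSet_Ioo] with y h1 h2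
    exact (inner_eq α hα ε hε W hW φ g hgm hg0 hφg μ hμ hm1 x y h2.1 h2.2 h1).2
  · exact ((by fun_prop : Measurable fun y => ENNReal.ofReal (g y)).mul hI).aemeasurable
  · filter_upwards [hφg', ae_restrict_mem measurableSet_Ioo] with y h1 h2
    exact (inner_eq α hα ε hε W hW φ g hgm hg0 hφg μ hμ hm1 x y h2.1 h2.2 h1).1

lemma profile_measure (α : ℝ) (hα : α ∈ Ioo (0:ℝ) 1) (ε : ℝ) (hε : 0 < ε) (W : ℝ → ℝ → ℝ)
    (hW : GoodW α W) (φ : ℝ → ℝ) (hφ : IsProfile (Kern ε W) φ) (hn : IsNormalised φ) :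
    ∃ μ : Measure ℝ, SFinite μ ∧ (∀ᵐ x ∂μ, 0 < x) ∧ ∫⁻ z, ENNReal.ofReal z ∂μ = 1 ∧
      (∀ s, MeasurableSet s → s ⊆ Ioi 0 → ∫ z in s, φ z = (μ s).toReal) ∧
      ∀ q : ℝ, 0 < q → 2 * ∫⁻ x, ENNReal.ofReal (1 - exp (-(q * x)) - q * x * exp (-(q * x))) ∂μ =
      ∫⁻ y, ∫⁻ z, kk ε W (y, z) * ENNReal.ofReal (1 - exp (-(q * y))) *
        ENNReal.ofReal (1 - exp (-(q * z))) ∂μ ∂μ := by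
  obtain ⟨hloc, hpos, hIntg, heq⟩ := hφ
  have hmeas : AEStronglyMeasurable φ (volume.restrict (Ioi 0)) := hloc.aestronglyMeasurable
  set g : ℝ → ℝ := (Ioi (0:ℝ)).indicator (fun x => max 0 (hmeas.mk φ x)) with hg
  have hgm : Measurable g :=
    (measurable_const.max hmeas.stronglyMeasurable_mk.measurable).indicator measurableSet_Ioi
  have hg0 : ∀ x, 0 ≤ g x := fun x => indicator_nonneg (fun _ _ => le_max_left _ _) x
  have hφg : ∀ᵐ x ∂(volume.restrict (Ioi (0:ℝ))), φ x = g x := by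
    filter_upwards [hpos, hmeas.ae_eq_mk, ae_restrict_mem measurableSet_Ioi] with x h1 h2 h3
    rw [hg, indicator_of_mem h3, ← h2, max_eq_right h1]
  have hgz : ∀ x ≤ 0, g x = 0 := fun x hx => indicator_of_notMem (by simpa using hx) _
  set f : ℝ → ℝ≥0∞ := fun x => ENNReal.ofReal (g x) with hf
  have hfm : Measurable f := by fun_prop
  have hfz : ∀ x ≤ 0, f x = 0 := fun x hx => by simp [hf, hgz x hx]
  set μ := volume.withDensity f with hμ
  have hm1 : ∫⁻ z, ENNReal.ofReal z ∂μ = 1 := by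
    rw [hμ, lintegral_withDensity_eq_lintegral_mul _ hfm (by fun_prop)]
    have e : ∀ z, (f * fun z => ENNReal.ofReal z) z = (Ioi 0).indicator (fun z => ENNReal.ofReal (z * g z)) z := by
      intro z
      by_cases h : 0 < z
      · have h' : z ∈ Ioi (0:ℝ) := h
        rw [indicator_of_mem h', ENNReal.ofReal_mul h.le, mul_comm]; rfl
      · have h' : z ∉ Ioi (0:ℝ) := h
        rw [indicator_of_notMem h', Pi.mul_apply, hfz z (not_lt.1 h), zero_mul]
    rw [lintegral_congr e, lintegral_indicator measurableSet_Ioi, ← ofReal_integral_eq_lintegral_ofReal]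
    · have : ∫ x in Ioi 0, x * g x = 1 := by
        rw [← hn]
        refine integral_congr_ae ?_
        filter_upwards [hφg] with x hx
        rw [hx]
      rw [this]; simp
    · refine hIntg.congr ?_
      filter_upwards [hφg] with x hx
      rw [hx]
    · filter_upwards [ae_restrict_mem measurableSet_Ioi] with x hx
      exact mul_nonneg (le_of_lt hx) (hg0 x)
  have hm1' : ∫⁻ z, ENNReal.ofReal z ∂μ ≠ ⊤ := by rw [hm1]; simp
  have hkm := kk_meas α ε W hW
  have hE1 : ∀ᵐ x ∂(volume.restrict (Ioi (0:ℝ))), x ^ 2 * g x = (JJ (kk ε W) μ x).toReal := by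
    filter_upwards [heq, hφg] with x h1 h2
    rw [← h2, h1]
    exact outer_eq α hα ε hε W hW φ g hgm hg0 hφg μ hμ hm1' x
  have hJt : ∀ᵐ x ∂(volume.restrict (Ioi (0:ℝ))), JJ (kk ε W) μ x = ⊤ → f x = 0 := by
    filter_upwards [hE1, ae_restrict_mem measurableSet_Ioi] with x h1 h2 h3
    rw [h3] at h1
    have hx : (x:ℝ) ≠ 0 := (ne_of_gt h2)
    have : g x = 0 := by simpa [hx] using h1
    simp [hf, this]
  have hJf := J_fin (kk ε W) hkm (kk_symm α ε W hW) f (kk_bound α hα ε hε W hW) μ hμ hfz hm1' hJt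
  have hE : ∀ᵐ x ∂(volume.restrict (Ioi (0:ℝ))), ENNReal.ofReal (x ^ 2) * f x = JJ (kk ε W) μ x := by
    filter_upwards [hE1, hJf] with x h1 h2
    rw [← ENNReal.ofReal_mul (by positivity), h1, ENNReal.ofReal_toReal h2]
  refine ⟨μ, inferInstance, ?_, hm1, ?_, ?_⟩
  · rw [ae_iff]
    have : {a : ℝ | ¬ 0 < a} = Iic 0 := by ext; simp
    rw [this, hμ, withDensity_apply _ measurableSet_Iic]
    have : ∀ᵐ x ∂(volume.restrict (Iic (0:ℝ))), f x = 0 := by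
      filter_upwards [ae_restrict_mem measurableSet_Iic] with x hx using hfz x hx
    rw [lintegral_congr_ae this]; simp
  · intro s hs hs0
    rw [hμ, withDensity_apply _ hs]
    have h1 : ∫ z in s, φ z = ∫ z in s, g z :=
      integral_congr_ae (ae_restrict_of_ae_restrict_of_subset hs0 hφg)
    rw [h1, integral_eq_lintegral_of_nonneg_ae]
    · exact ae_of_all _ hg0
    · exact hgm.aestronglyMeasurable
  · intro q hq
    exact identity (kk ε W) hkm (kk_symm α ε W hW) (kk_zero ε W) f hfm μ hμ hfz hE q hq

lemma one_sub_exp_nonneg (t : ℝ) (ht : 0 ≤ t) : 0 ≤ 1 - exp (-t) := by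
  rw [sub_nonneg, Real.exp_le_one_iff]; linarith

lemma one_sub_exp_le (t : ℝ) : 1 - exp (-t) ≤ t := by
  have := Real.add_one_le_exp (-t); linarith

lemma one_sub_exp_le_rpow (t β : ℝ) (ht : 0 < t) (hβ0 : 0 < β) (hβ : β < 1) :
    1 - exp (-t) ≤ t ^ β := by
  rcases le_total t 1 with h | h
  · calc _ ≤ t := one_sub_exp_le t
      _ = t ^ (1:ℝ) := (Real.rpow_one t).symm
      _ ≤ _ := Real.rpow_le_rpow_of_exponent_ge ht h hβ.le
  · have := Real.one_le_rpow h hβ0.le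
    linarith [Real.exp_pos (-t)]

section
variable (μ : Measure ℝ)

lemma int_id (hpos : ∀ᵐ x ∂μ, 0 < x) (hm1 : ∫⁻ z, ENNReal.ofReal z ∂μ = 1) :
    Integrable (fun x : ℝ => x) μ ∧ ∫ x, x ∂μ = 1 := by
  have h0 : 0 ≤ᵐ[μ] (fun x : ℝ => x) := by filter_upwards [hpos] with x hx using hx.le
  constructor
  · refine ⟨by fun_prop, ?_⟩
    rw [hasFiniteIntegral_iff_ofReal h0, hm1]; simp
  · rw [integral_eq_lintegral_of_nonneg_ae h0 (by fun_prop), hm1]; simp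

lemma int_phi (hpos : ∀ᵐ x ∂μ, 0 < x) (hi : Integrable (fun x : ℝ => x) μ) (q : ℝ) (hq : 0 ≤ q) :
    Integrable (fun x : ℝ => 1 - exp (-(q * x))) μ := by
  refine (hi.const_mul q).mono' (by fun_prop) ?_
  filter_upwards [hpos] with x hx
  rw [Real.norm_of_nonneg (one_sub_exp_nonneg _ (by positivity))]
  exact one_sub_exp_le _

lemma int_D (hpos : ∀ᵐ x ∂μ, 0 < x) (hi : Integrable (fun x : ℝ => x) μ) (q : ℝ) (hq : 0 ≤ q) :
    Integrable (fun x : ℝ => x * exp (-(q * x))) μ := by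
  refine hi.mono' (by fun_prop) ?_
  filter_upwards [hpos] with x hx
  rw [Real.norm_of_nonneg (by positivity)]
  have : exp (-(q * x)) ≤ 1 := by rw [Real.exp_le_one_iff]; have : 0 ≤ q * x := by positivity
                                  linarith
  nlinarith

lemma phi_le (hpos : ∀ᵐ x ∂μ, 0 < x) (hm1 : ∫⁻ z, ENNReal.ofReal z ∂μ = 1) (q : ℝ) (hq : 0 ≤ q) :
    0 ≤ ∫ x, (1 - exp (-(q * x))) ∂μ ∧ ∫ x, (1 - exp (-(q * x))) ∂μ ≤ q := by
  obtain ⟨hi, h1⟩ := int_id μ hpos hm1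
  constructor
  · refine integral_nonneg_of_ae ?_
    filter_upwards [hpos] with x hx using one_sub_exp_nonneg _ (by positivity)
  · calc _ ≤ ∫ x, q * x ∂μ := integral_mono (int_phi μ hpos hi q hq) (hi.const_mul q)
            fun x => one_sub_exp_le _
      _ = q := by rw [integral_const_mul, h1, mul_one]

lemma real_identity (α : ℝ) (hα : α ∈ Ioo (0:ℝ) 1) (ε : ℝ) (hε : 0 < ε) (W : ℝ → ℝ → ℝ)
    (hW : GoodW α W) (hpos : ∀ᵐ x ∂μ, 0 < x) (hm1 : ∫⁻ z, ENNReal.ofReal z ∂μ = 1)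
    (hid : ∀ q : ℝ, 0 < q → 2 * ∫⁻ x, ENNReal.ofReal (1 - exp (-(q * x)) - q * x * exp (-(q * x))) ∂μ =
      ∫⁻ y, ∫⁻ z, kk ε W (y, z) * ENNReal.ofReal (1 - exp (-(q * y))) *
        ENNReal.ofReal (1 - exp (-(q * z))) ∂μ ∂μ) :
    μ univ ≤ 1 ∧ ∀ q : ℝ, 0 < q →
      (∫ x, (1 - exp (-(q * x))) ∂μ) ^ 2 ≤
        (∫ x, (1 - exp (-(q * x))) ∂μ) - q * ∫ x, x * exp (-(q * x)) ∂μ ∧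
      (∫ x, (1 - exp (-(q * x))) ∂μ) - q * ∫ x, x * exp (-(q * x)) ∂μ ≤
        (∫ x, (1 - exp (-(q * x))) ∂μ) ^ 2 + ε * q ^ (2 - α) := by
  obtain ⟨hi, h1⟩ := int_id μ hpos hm1
  have hL : ∀ q : ℝ, 0 < q → ∫⁻ x, ENNReal.ofReal (1 - exp (-(q * x)) - q * x * exp (-(q * x))) ∂μ =
      ENNReal.ofReal ((∫ x, (1 - exp (-(q * x))) ∂μ) - q * ∫ x, x * exp (-(q * x)) ∂μ) := by
    intro q hq
    have ip := int_phi μ hpos hi q hq.le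
    have iD := (int_D μ hpos hi q hq.le).const_mul q
    rw [← integral_const_mul, ← integral_sub ip iD, ofReal_integral_eq_lintegral_ofReal
      (f := fun x => 1 - exp (-(q * x)) - q * (x * exp (-(q * x)))) (ip.sub iD)]
    · simp only [mul_assoc]
    · filter_upwards [hpos] with x hx
      have := exp_num_nonneg (q * x) (by positivity)
      simp only [Pi.zero_apply]; linarith
  have hP : ∀ q : ℝ, 0 < q → ∫⁻ x, ENNReal.ofReal (1 - exp (-(q * x))) ∂μ =
      ENNReal.ofReal (∫ x, (1 - exp (-(q * x))) ∂μ) := by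
    intro q hq
    rw [ofReal_integral_eq_lintegral_ofReal (int_phi μ hpos hi q hq.le)]
    filter_upwards [hpos] with x hx using one_sub_exp_nonneg _ (by positivity)
  have hPP : ∀ q : ℝ, 0 < q → ∫⁻ y, ∫⁻ z, 2 * ENNReal.ofReal (1 - exp (-(q * y))) *
        ENNReal.ofReal (1 - exp (-(q * z))) ∂μ ∂μ = ENNReal.ofReal (2 * (∫ x, (1 - exp (-(q * x))) ∂μ) ^ 2) := by
    intro q hq
    have e : ∀ y, ∫⁻ z, 2 * ENNReal.ofReal (1 - exp (-(q * y))) *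
        ENNReal.ofReal (1 - exp (-(q * z))) ∂μ = 2 * ENNReal.ofReal (1 - exp (-(q * y))) *
        ENNReal.ofReal (∫ x, (1 - exp (-(q * x))) ∂μ) := fun y => by
      rw [lintegral_const_mul _ (by fun_prop), hP q hq]
    simp_rw [e]
    rw [lintegral_mul_const _ (by fun_prop), lintegral_const_mul _ (by fun_prop), hP q hq, sq,
      ENNReal.ofReal_mul (by norm_num), ENNReal.ofReal_mul (phi_le μ hpos hm1 q hq.le).1]
    simp [mul_assoc]
  have lower : ∀ q : ℝ, 0 < q → (∫ x, (1 - exp (-(q * x))) ∂μ) ^ 2 ≤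
        (∫ x, (1 - exp (-(q * x))) ∂μ) - q * ∫ x, x * exp (-(q * x)) ∂μ := by
    intro q hq
    have h := hid q hq
    have hle : ENNReal.ofReal (2 * (∫ x, (1 - exp (-(q * x))) ∂μ) ^ 2) ≤
        ENNReal.ofReal (2 * ((∫ x, (1 - exp (-(q * x))) ∂μ) - q * ∫ x, x * exp (-(q * x)) ∂μ)) := by
      rw [ENNReal.ofReal_mul (by norm_num : (0:ℝ) ≤ 2) (q := _ - _), ← hL q hq]
      simp only [ENNReal.ofReal_ofNat]
      rw [h, ← hPP q hq]
      refine lintegral_mono_ae ?_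
      filter_upwards [hpos] with y hy
      refine lintegral_mono_ae ?_
      filter_upwards [hpos] with z hz
      gcongr
      rw [kk_eq _ _ _ _ hy hz]
      have := (hW.2.2.2 y z hy hz).1
      rw [show (2:ℝ≥0∞) = ENNReal.ofReal 2 by simp]
      refine ENNReal.ofReal_le_ofReal ?_
      unfold Kern; nlinarith
    have hnn : 0 ≤ 2 * ((∫ x, (1 - exp (-(q * x))) ∂μ) - q * ∫ x, x * exp (-(q * x)) ∂μ) := by
      rw [← integral_const_mul, ← integral_sub (int_phi μ hpos hi q hq.le) ((int_D μ hpos hi q hq.le).const_mul q)]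
      refine mul_nonneg (by norm_num) (integral_nonneg_of_ae ?_)
      filter_upwards [hpos] with x hx
      have := exp_num_nonneg (q * x) (by positivity)
      simp only [Pi.zero_apply]; linarith
    have := (ENNReal.ofReal_le_ofReal_iff hnn).1 hle
    linarith
  have phi1 : ∀ q : ℝ, 0 < q → ∫ x, (1 - exp (-(q * x))) ∂μ ≤ 1 := by
    intro q hq
    have h2 := lower q hq
    have : 0 ≤ ∫ x, x * exp (-(q * x)) ∂μ := by
      refine integral_nonneg_of_ae ?_
      filter_upwards [hpos] with x hx
      simp only [Pi.zero_apply]; positivity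
    have := mul_nonneg hq.le this
    by_contra! hc
    nlinarith
  have hm0 : μ univ ≤ 1 := by
    have hlim : ∀ᵐ x ∂μ, liminf (fun n : ℕ => ENNReal.ofReal (1 - exp (-(((n:ℝ) + 1) * x)))) atTop = 1 := by
      filter_upwards [hpos] with x hx
      refine Tendsto.liminf_eq ?_
      have t1 : Tendsto (fun n : ℕ => ((n:ℝ) + 1) * x) atTop atTop :=
        (tendsto_atTop_add_const_right _ _ tendsto_natCast_atTop_atTop).atTop_mul_const hx
      have t2 := (Real.tendsto_exp_neg_atTop_nhds_zero.comp t1).const_sub 1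
      have t3 := ENNReal.tendsto_ofReal t2
      simpa using t3
    calc μ univ = ∫⁻ x, 1 ∂μ := by simp
      _ = ∫⁻ x, liminf (fun n : ℕ => ENNReal.ofReal (1 - exp (-(((n:ℝ) + 1) * x)))) atTop ∂μ :=
        (lintegral_congr_ae hlim).symm
      _ ≤ liminf (fun n : ℕ => ∫⁻ x, ENNReal.ofReal (1 - exp (-(((n:ℝ) + 1) * x))) ∂μ) atTop :=
        lintegral_liminf_le (fun n => by fun_prop)
      _ ≤ liminf (fun n : ℕ => (1:ℝ≥0∞)) atTop := by
        refine liminf_le_liminf (Eventually.of_forall fun n => ?_)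
        have hn : (0:ℝ) < n + 1 := by positivity
        rw [hP _ hn]
        exact ENNReal.ofReal_le_one.2 (phi1 _ hn)
      _ = 1 := by simp
  refine ⟨hm0, fun q hq => ⟨lower q hq, ?_⟩⟩
  have ha : ∫⁻ z, ENNReal.ofReal (α + (1 - α) * z) ∂μ ≤ 1 := by
    calc _ = ∫⁻ z, (ENNReal.ofReal α + ENNReal.ofReal (1 - α) * ENNReal.ofReal z) ∂μ := by
          refine lintegral_congr_ae ?_
          filter_upwards [hpos] with z hz
          have : 0 ≤ 1 - α := by linarith [hα.2]
          rw [ENNReal.ofReal_add hα.1.le (by positivity), ENNReal.ofReal_mul this]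
      _ = ENNReal.ofReal α * μ univ + ENNReal.ofReal (1 - α) * 1 := by
          rw [lintegral_add_left (by fun_prop), lintegral_const_mul _ (by fun_prop), hm1,
            lintegral_const]
      _ ≤ ENNReal.ofReal α * 1 + ENNReal.ofReal (1 - α) * 1 := by gcongr
      _ = 1 := by
        rw [mul_one, mul_one, ← ENNReal.ofReal_add hα.1.le (by linarith [hα.2])]; simp
  set c := ENNReal.ofReal (ε * q ^ (2 - α)) with hc
  have hptw : ∀ y z : ℝ, 0 < y → 0 < z → kk ε W (y, z) * ENNReal.ofReal (1 - exp (-(q * y))) *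
        ENNReal.ofReal (1 - exp (-(q * z))) ≤ 2 * ENNReal.ofReal (1 - exp (-(q * y))) *
        ENNReal.ofReal (1 - exp (-(q * z))) + (c * ENNReal.ofReal y * ENNReal.ofReal (α + (1 - α) * z)
          + c * ENNReal.ofReal (α + (1 - α) * y) * ENNReal.ofReal z) := by
    intro y z hy hz
    have hα1 : 0 < 1 - α := by linarith [hα.2]
    have hα0 := hα.1
    have n1 := one_sub_exp_nonneg (q * y) (by positivity)
    have n2 := one_sub_exp_nonneg (q * z) (by positivity)
    have hw := hW.2.2.2 y z hy hz
    have hK : 0 ≤ Kern ε W y z := by unfold Kern; nlinarith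
    have aux : ∀ s t : ℝ, 0 < s → 0 < t → (s / t) ^ α * ((1 - exp (-(q * s))) * (1 - exp (-(q * t)))) ≤
        q ^ (2 - α) * s * (α + (1 - α) * t) := by
      intro s t hs ht
      have b1 := one_sub_exp_le_rpow (q * s) (1 - α) (by positivity) hα1 (by linarith)
      have b2 := one_sub_exp_le (q * t)
      have hst : (0:ℝ) ≤ (s / t) ^ α := by positivity
      have young : t ^ (1 - α) ≤ α + (1 - α) * t := by
        have := rpow_one_add_le_one_add_mul_self (s := t - 1) (by linarith) hα1.le (by linarith)
        rw [show 1 + (t - 1) = t by ring] at this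
        linarith
      calc _ ≤ (s / t) ^ α * ((q * s) ^ (1 - α) * (q * t)) := by
            gcongr
            exact one_sub_exp_nonneg _ (by positivity)
        _ = q ^ (2 - α) * s * t ^ (1 - α) := by
            have e1 : s = s ^ α * s ^ (1 - α) := by rw [← Real.rpow_add hs]; simp
            have e2 : t = t ^ α * t ^ (1 - α) := by rw [← Real.rpow_add ht]; simp
            have e3 : q ^ (2 - α) = q ^ (1 - α) * q := by
              rw [show 2 - α = (1 - α) + 1 by ring, Real.rpow_add hq, Real.rpow_one]
            rw [Real.div_rpow hs.le ht.le, Real.mul_rpow hq.le hs.le, e3]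
            have : t ^ α ≠ 0 := by positivity
            calc _ = (s ^ α * s ^ (1 - α)) * q ^ (1 - α) * q * (t / t ^ α) := by ring
              _ = s * q ^ (1 - α) * q * t ^ (1 - α) := by
                rw [← e1]; congr 1; rw [div_eq_iff this, mul_comm]; exact e2
              _ = _ := by ring
        _ ≤ _ := by gcongr
    have a1 := aux y z hy hz
    have a2 := aux z y hz hy
    have key : Kern ε W y z * (1 - exp (-(q * y))) * (1 - exp (-(q * z))) ≤
        2 * (1 - exp (-(q * y))) * (1 - exp (-(q * z))) + 
        (ε * q ^ (2 - α) * y * (α + (1 - α) * z) + ε * q ^ (2 - α) * (α + (1 - α) * y) * z) := by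
      unfold Kern
      have nn := mul_nonneg n1 n2
      have b := mul_le_mul_of_nonneg_right hw.2 nn
      have : W y z * ((1 - exp (-(q * y))) * (1 - exp (-(q * z)))) ≤ q ^ (2 - α) * y * (α + (1 - α) * z) +
        q ^ (2 - α) * z * (α + (1 - α) * y) := by
        linarith
      have := mul_le_mul_of_nonneg_left this hε.le
      linarith
    have hqq : 0 ≤ ε * q ^ (2 - α) := by positivity
    rw [kk_eq _ _ _ _ hy hz, ← ENNReal.ofReal_mul hK, ← ENNReal.ofReal_mul (by positivity),
      show (2:ℝ≥0∞) = ENNReal.ofReal 2 by simp, ← ENNReal.ofReal_mul (by norm_num),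
      ← ENNReal.ofReal_mul (by positivity), hc, ← ENNReal.ofReal_mul hqq,
      ← ENNReal.ofReal_mul hqq, ← ENNReal.ofReal_mul (by positivity),
      ← ENNReal.ofReal_mul (by positivity), ← ENNReal.ofReal_add (by positivity) (by positivity),
      ← ENNReal.ofReal_add (by positivity) (by positivity)]
    exact ENNReal.ofReal_le_ofReal key
  have hIntg : ∀ F G : ℝ → ℝ≥0∞, Measurable F → Measurable G →
      ∫⁻ y, ∫⁻ z, c * F y * G z ∂μ ∂μ = c * (∫⁻ y, F y ∂μ) * (∫⁻ z, G z ∂μ) := by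
    intro F G hF hG
    have e : ∀ y, ∫⁻ z, c * F y * G z ∂μ = c * F y * ∫⁻ z, G z ∂μ := fun y =>
      lintegral_const_mul _ hG
    simp_rw [e]
    rw [lintegral_mul_const _ (by fun_prop), lintegral_const_mul _ hF]
  have : IsFiniteMeasure μ := ⟨hm0.trans_lt (by simp)⟩
  have hup : ENNReal.ofReal (2 * ((∫ x, (1 - exp (-(q * x))) ∂μ) - q * ∫ x, x * exp (-(q * x)) ∂μ)) ≤
      ENNReal.ofReal (2 * (∫ x, (1 - exp (-(q * x))) ∂μ) ^ 2 + 2 * (ε * q ^ (2 - α))) := by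
    rw [ENNReal.ofReal_mul (by norm_num : (0:ℝ) ≤ 2), ← hL q hq]
    simp only [ENNReal.ofReal_ofNat]
    rw [hid q hq]
    calc _ ≤ ∫⁻ y, ∫⁻ z, (2 * ENNReal.ofReal (1 - exp (-(q * y))) *
        ENNReal.ofReal (1 - exp (-(q * z))) + (c * ENNReal.ofReal y * ENNReal.ofReal (α + (1 - α) * z)
          + c * ENNReal.ofReal (α + (1 - α) * y) * ENNReal.ofReal z)) ∂μ ∂μ := by
          refine lintegral_mono_ae ?_
          filter_upwards [hpos] with y hy
          refine lintegral_mono_ae ?_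
          filter_upwards [hpos] with z hz
          exact hptw y z hy hz
      _ = (∫⁻ y, ∫⁻ z, 2 * ENNReal.ofReal (1 - exp (-(q * y))) *
        ENNReal.ofReal (1 - exp (-(q * z))) ∂μ ∂μ) + ((∫⁻ y, ∫⁻ z, c * ENNReal.ofReal y * ENNReal.ofReal (α + (1 - α) * z) ∂μ ∂μ)
          + (∫⁻ y, ∫⁻ z, c * ENNReal.ofReal (α + (1 - α) * y) * ENNReal.ofReal z ∂μ ∂μ)) := by
          have M1 : Measurable fun p : ℝ × ℝ => 2 * ENNReal.ofReal (1 - exp (-(q * p.1))) *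
            ENNReal.ofReal (1 - exp (-(q * p.2))) := by fun_prop
          have M2 : Measurable fun p : ℝ × ℝ => c * ENNReal.ofReal p.1 * ENNReal.ofReal (α + (1 - α) * p.2) := by
            fun_prop
          rw [← lintegral_add_left M2.lintegral_prod_right', ← lintegral_add_left M1.lintegral_prod_right']
          refine lintegral_congr fun y => ?_
          rw [← lintegral_add_left (by fun_prop), ← lintegral_add_left (by fun_prop)]
      _ ≤ ENNReal.ofReal (2 * (∫ x, (1 - exp (-(q * x))) ∂μ) ^ 2) + (c + c) := by
          rw [hPP q hq, hIntg _ _ (by fun_prop) (by fun_prop), hIntg _ _ (by fun_prop) (by fun_prop), hm1]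
          gcongr
          · calc _ ≤ c * 1 * 1 := by gcongr
              _ = c := by simp
          · calc _ ≤ c * 1 * 1 := by gcongr
              _ = c := by simp
      _ = _ := by
          rw [hc, ← ENNReal.ofReal_add (by positivity) (by positivity),
            ← ENNReal.ofReal_add (by positivity) (by positivity)]
          congr 1; ring
  have := (ENNReal.ofReal_le_ofReal_iff (by positivity)).1 hup
  linarith

end

lemma phi_deriv (μ : Measure ℝ) (hpos : ∀ᵐ x ∂μ, 0 < x) (hi : Integrable (fun x : ℝ => x) μ)
    (q : ℝ) (hq : 0 < q) :
    HasDerivAt (fun q => ∫ x, (1 - exp (-(q * x))) ∂μ) (∫ x, x * exp (-(q * x)) ∂μ) q := by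
  refine (hasDerivAt_integral_of_dominated_loc_of_deriv_le (s := Ioi 0) (bound := fun x => x)
    (F := fun q x => 1 - exp (-(q * x))) (F' := fun q x => x * exp (-(q * x)))
    (Ioi_mem_nhds hq) ?_ (int_phi μ hpos hi q hq.le) (by fun_prop) ?_ hi ?_).2
  · exact Eventually.of_forall fun q => by fun_prop
  · filter_upwards [hpos] with x hx r hr
    have hr : 0 < r := hr
    rw [Real.norm_of_nonneg (by positivity)]
    have : exp (-(r * x)) ≤ 1 := by
      rw [Real.exp_le_one_iff]
      have : 0 ≤ r * x := by positivity
      linarith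
    nlinarith
  · filter_upwards with x r hr
    have := (((hasDerivAt_id r).mul_const x).neg.exp).const_sub 1
    exact this.congr_deriv (by simp; ring)

lemma phi_slope (μ : Measure ℝ) (hpos : ∀ᵐ x ∂μ, 0 < x) (hi : Integrable (fun x : ℝ => x) μ)
    (h1 : ∫ x, x ∂μ = 1) :
    Tendsto (fun q => (∫ x, (1 - exp (-(q * x))) ∂μ) / q) (nhdsWithin 0 (Ioi 0)) (nhds 1) := by
  have e : ∀ q : ℝ, (∫ x, (1 - exp (-(q * x))) ∂μ) / q = ∫ x, (1 - exp (-(q * x))) / q ∂μ :=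
    fun q => (integral_div _ _).symm
  simp_rw [e]
  rw [show nhds (1:ℝ) = nhds (∫ x, x ∂μ) by rw [h1]]
  refine tendsto_integral_filter_of_dominated_convergence (fun x => x) ?_ ?_ hi ?_
  · exact Eventually.of_forall fun q => by fun_prop
  · filter_upwards [self_mem_nhdsWithin] with q hq
    have hq : 0 < q := hq
    filter_upwards [hpos] with x hx
    rw [Real.norm_of_nonneg (div_nonneg (one_sub_exp_nonneg _ (by positivity)) hq.le), div_le_iff₀ hq]
    linarith [one_sub_exp_le (q * x)]
  · filter_upwards with x
    have hd : HasDerivAt (fun r => 1 - exp (-(r * x))) x 0 := by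
      have := (((hasDerivAt_id (0:ℝ)).mul_const x).neg.exp).const_sub 1
      exact this.congr_deriv (by simp)
    have := (hasDerivAt_iff_tendsto_slope_zero.1 hd).mono_left
      (nhdsWithin_mono 0 (fun x (hx : 0 < x) => (ne_of_gt hx : x ≠ 0)))
    refine this.congr fun q => ?_
    simp [div_eq_inv_mul]

lemma ode_bound (μ : Measure ℝ) (α : ℝ) (hα : α ∈ Ioo (0:ℝ) 1) (ε : ℝ) (hε : 0 < ε)
    (hpos : ∀ᵐ x ∂μ, 0 < x) (hm1 : ∫⁻ z, ENNReal.ofReal z ∂μ = 1)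
    (hR : ∀ q : ℝ, 0 < q →
      (∫ x, (1 - exp (-(q * x))) ∂μ) ^ 2 ≤
        (∫ x, (1 - exp (-(q * x))) ∂μ) - q * ∫ x, x * exp (-(q * x)) ∂μ ∧
      (∫ x, (1 - exp (-(q * x))) ∂μ) - q * ∫ x, x * exp (-(q * x)) ∂μ ≤
        (∫ x, (1 - exp (-(q * x))) ∂μ) ^ 2 + ε * q ^ (2 - α)) (q : ℝ) (hq : 0 < q) :
    (1 / (1 + q) - (∫ x, (1 - exp (-(q * x))) ∂μ) / q) ^ 2 ≤ 2 * ε * q ^ (1 - α) / (1 - α) := by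
  obtain ⟨hi, h1⟩ := int_id μ hpos hm1
  have hα1 : 0 < 1 - α := by linarith [hα.2]
  set Φ : ℝ → ℝ := fun q => ∫ x, (1 - exp (-(q * x))) ∂μ with hΦ
  set D : ℝ → ℝ := fun q => ∫ x, x * exp (-(q * x)) ∂μ with hD
  have hd : ∀ q, 0 < q → HasDerivAt Φ (D q) q := fun q hq => phi_deriv μ hpos hi q hq
  set w : ℝ → ℝ := fun q => 1 / (1 + q) - Φ q / q with hw
  have hwd : ∀ q, 0 < q → HasDerivAt w (-(1 / (1 + q) ^ 2) - (D q * q - Φ q) / q ^ 2) q := by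
    intro q hq
    have a1 : HasDerivAt (fun q : ℝ => 1 / (1 + q)) (-(1 / (1 + q) ^ 2)) q := by
      have := ((hasDerivAt_id q).const_add 1).inv (by simp; positivity)
      simp only [one_div]
      exact this.congr_deriv (by simp; ring)
    have a2 := (hd q hq).div (hasDerivAt_id q) hq.ne'
    exact (a1.sub a2).congr_deriv (by simp)
  set h : ℝ → ℝ := fun q => w q ^ 2 - 2 * ε * q ^ (1 - α) / (1 - α) with hh
  have hhd : ∀ q, 0 < q → HasDerivAt h (2 * w q * (-(1 / (1 + q) ^ 2) - (D q * q - Φ q) / q ^ 2)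
      - 2 * ε * q ^ (-α)) q := by
    intro q hq
    have a1 := (hwd q hq).pow 2
    have a2 : HasDerivAt (fun q : ℝ => 2 * ε * q ^ (1 - α) / (1 - α)) (2 * ε * q ^ (-α)) q := by
      have := ((Real.hasDerivAt_rpow_const (x := q) (p := 1 - α) (Or.inl hq.ne')).const_mul (2 * ε)).div_const (1 - α)
      refine this.congr_deriv ?_
      rw [show 1 - α - 1 = -α by ring]
      field_simp
    exact (a1.sub a2).congr_deriv (by simp)
  have hneg : ∀ q, 0 < q → 2 * w q * (-(1 / (1 + q) ^ 2) - (D q * q - Φ q) / q ^ 2)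
      - 2 * ε * q ^ (-α) ≤ 0 := by
    intro q hq
    obtain ⟨r1, r2⟩ := hR q hq
    obtain ⟨p1, p2⟩ := phi_le μ hpos hm1 q hq.le
    change Φ q ^ 2 ≤ Φ q - q * D q at r1
    change Φ q - q * D q ≤ Φ q ^ 2 + ε * q ^ (2 - α) at r2
    change 0 ≤ Φ q at p1
    change Φ q ≤ q at p2
    set u := Φ q / q with hu
    set v := 1 / (1 + q) with hv
    have u0 : 0 ≤ u := by positivity
    have u1 : u ≤ 1 := by rw [hu, div_le_one hq]; exact p2
    have v0 : 0 ≤ v := by positivity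
    have v1 : v ≤ 1 := by rw [hv, div_le_one (by positivity)]; linarith
    set ρ := (Φ q - q * D q - Φ q ^ 2) / q ^ 2 with hρ
    have ρ0 : 0 ≤ ρ := div_nonneg (by linarith) (by positivity)
    have ρ1 : ρ ≤ ε * q ^ (-α) := by
      rw [hρ, div_le_iff₀ (by positivity)]
      have : q ^ (2 - α) = q ^ (-α) * q ^ 2 := by
        rw [← Real.rpow_natCast q 2, ← Real.rpow_add hq]; congr 1; push_cast; ring
      rw [mul_assoc, ← this]; linarith
    have e1 : -(1 / (1 + q) ^ 2) - (D q * q - Φ q) / q ^ 2 = -v ^ 2 + u ^ 2 + ρ := by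
      rw [hu, hv, hρ]; field_simp; ring
    have e2 : w q = v - u := rfl
    rw [e1, e2]
    have : 2 * (v - u) * (-v ^ 2 + u ^ 2 + ρ) = - (2 * (u + v) * (v - u) ^ 2) + 2 * (v - u) * ρ := by ring
    rw [this]
    have k1 : 0 ≤ 2 * (u + v) * (v - u) ^ 2 := by positivity
    have k2 : (v - u) * ρ ≤ ρ := by nlinarith
    linarith
  have hanti : AntitoneOn h (Ioi 0) := by
    refine antitoneOn_of_deriv_nonpos (convex_Ioi 0) ?_ ?_ ?_
    · exact fun x hx => (hhd x hx).continuousAt.continuousWithinAt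
    · rw [interior_Ioi]
      exact fun x hx => (hhd x hx).differentiableAt.differentiableWithinAt
    · rw [interior_Ioi]
      intro x hx
      rw [(hhd x hx).deriv]
      exact hneg x hx
  have hlim : Tendsto h (nhdsWithin 0 (Ioi 0)) (nhds 0) := by
    have t1 : Tendsto w (nhdsWithin 0 (Ioi 0)) (nhds (1 / (1 + 0) - 1)) := by
      refine Tendsto.sub ?_ (phi_slope μ hpos hi h1)
      refine Tendsto.mono_left ?_ nhdsWithin_le_nhds
      refine Tendsto.div tendsto_const_nhds (tendsto_const_nhds.add tendsto_id) (by norm_num)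
    have t2 : Tendsto (fun q : ℝ => 2 * ε * q ^ (1 - α) / (1 - α)) (nhdsWithin 0 (Ioi 0))
        (nhds (2 * ε * 0 ^ (1 - α) / (1 - α))) := by
      refine Tendsto.mono_left ?_ nhdsWithin_le_nhds
      exact ((Real.continuous_rpow_const hα1.le).tendsto 0 |>.const_mul _).div_const _
    have := (t1.pow 2).sub t2
    rw [Real.zero_rpow hα1.ne'] at this
    simpa using this
  have : h q ≤ 0 := by
    refine ge_of_tendsto hlim ?_
    filter_upwards [Ioo_mem_nhdsGT hq] with r hr
    exact hanti hr.1 hq hr.2.le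
  simp only [hh, hw] at this
  linarith

section conv
variable (μ : ℕ → Measure ℝ) 

lemma exp_Icc (x : ℝ) (hx : 0 < x) : exp (-x) ∈ Icc (0:ℝ) 1 :=
  ⟨(Real.exp_pos _).le, by rw [Real.exp_le_one_iff]; linarith⟩

lemma mass_lim [∀ k, IsFiniteMeasure (μ k)] (hmass : ∀ k, (μ k) univ ≤ 1)
    (hpos : ∀ k, ∀ᵐ x ∂(μ k), 0 < x)
    (hΦ : ∀ q : ℝ, 0 < q → Tendsto (fun k => ∫ x, (1 - exp (-(q * x))) ∂(μ k)) atTop (nhds (q / (1 + q)))) :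
    Tendsto (fun k => (μ k).real univ) atTop (nhds 1) := by
  rw [Metric.tendsto_atTop]
  intro δ hδ
  have hq : (0:ℝ) < 2 / δ := by positivity
  have h1 := (Metric.tendsto_atTop.1 (hΦ (2 / δ) hq)) (δ / 2) (by positivity)
  obtain ⟨N, hN⟩ := h1
  refine ⟨N, fun k hk => ?_⟩
  have h2 := hN k hk
  have h3 : (μ k).real univ ≤ 1 := by
    have := ENNReal.toReal_mono (by simp) (hmass k)
    simpa [Measure.real] using this
  have hIntg : Integrable (fun x : ℝ => 1 - exp (-(2 / δ * x))) (μ k) := by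
    refine (integrable_const (1:ℝ)).mono' (by fun_prop) ?_
    filter_upwards [hpos k] with x hx
    rw [Real.norm_of_nonneg (one_sub_exp_nonneg _ (by positivity))]
    linarith [Real.exp_pos (-(2 / δ * x))]
  have h4 : ∫ x, (1 - exp (-((2 / δ) * x))) ∂(μ k) ≤ (μ k).real univ := by
    calc _ ≤ ∫ x, (1:ℝ) ∂(μ k) := by
          refine integral_mono hIntg (integrable_const _) fun x => ?_
          simp only; linarith [Real.exp_pos (-(2 / δ * x))]
      _ = _ := by simp
  rw [Real.dist_eq, abs_lt] at h2 ⊢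
  have h5 : 2 / δ / (1 + 2 / δ) ≥ 1 - δ / 2 := by
    rw [ge_iff_le, le_div_iff₀ (by positivity)]
    have : δ * (2 / δ) = 2 := by field_simp
    nlinarith
  constructor <;> linarith [h2.1, h2.2]

lemma poly_lim [∀ k, IsFiniteMeasure (μ k)] (hmass : ∀ k, (μ k) univ ≤ 1)
    (hpos : ∀ k, ∀ᵐ x ∂(μ k), 0 < x)
    (hΦ : ∀ q : ℝ, 0 < q → Tendsto (fun k => ∫ x, (1 - exp (-(q * x))) ∂(μ k)) atTop (nhds (q / (1 + q))))
    (p : Polynomial ℝ) :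
    Tendsto (fun k => ∫ x, p.eval (exp (-x)) ∂(μ k)) atTop (nhds (∫ t in (0:ℝ)..1, p.eval t)) := by
  have hm := mass_lim μ hmass hpos hΦ
  have hpi : ∀ (p : Polynomial ℝ) k, Integrable (fun x => p.eval (exp (-x))) (μ k) := by
    intro p k
    obtain ⟨C, hC⟩ := (isCompact_Icc (a := (0:ℝ)) (b := 1)).exists_bound_of_continuousOn
      (f := fun t => p.eval t) p.continuous.continuousOn
    refine (integrable_const C).mono' (p.continuous.measurable.comp (by fun_prop)).aestronglyMeasurable ?_
    filter_upwards [hpos k] with x hx using hC _ (exp_Icc x hx)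
  induction p using Polynomial.induction_on' with
  | add p r hp hr =>
    simp only [Polynomial.eval_add]
    rw [intervalIntegral.integral_add (p.continuous.intervalIntegrable _ _) (r.continuous.intervalIntegrable _ _)]
    refine (hp.add hr).congr fun k => ?_
    rw [integral_add (hpi p k) (hpi r k)]
  | monomial n a =>
    simp only [Polynomial.eval_monomial, intervalIntegral.integral_const_mul, integral_const_mul]
    refine Tendsto.const_mul a ?_
    rw [integral_pow]
    rcases Nat.eq_zero_or_pos n with rfl | hn
    · simpa using hm
    · have hn' : (0:ℝ) < n := by exact_mod_cast hn
      have := hm.sub (hΦ n hn')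
      have e : (1:ℝ) - n / (1 + n) = (1 ^ (n + 1) - 0 ^ (n + 1)) / (n + 1) := by
        simp; field_simp; ring
      rw [e] at this
      refine this.congr fun k => ?_
      have e2 : (μ k).real univ = ∫ x, (1:ℝ) ∂(μ k) := by simp
      have hi : Integrable (fun x : ℝ => 1 - exp (-(n * x))) (μ k) := by
        refine (integrable_const (1:ℝ)).mono' (by fun_prop) ?_
        filter_upwards [hpos k] with x hx
        rw [Real.norm_of_nonneg (one_sub_exp_nonneg _ (by positivity))]
        linarith [Real.exp_pos (-(n * x))]
      rw [e2, ← integral_sub (integrable_const _) hi]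
      refine integral_congr_ae (ae_of_all _ fun x => ?_)
      simp only [sub_sub_cancel]
      rw [← Real.exp_nat_mul]; congr 1; ring

lemma cont_lim [∀ k, IsFiniteMeasure (μ k)] (hmass : ∀ k, (μ k) univ ≤ 1)
    (hpos : ∀ k, ∀ᵐ x ∂(μ k), 0 < x)
    (hΦ : ∀ q : ℝ, 0 < q → Tendsto (fun k => ∫ x, (1 - exp (-(q * x))) ∂(μ k)) atTop (nhds (q / (1 + q))))
    (g : ℝ → ℝ) (hg : Continuous g) :
    (∀ k, Integrable (fun x => g (exp (-x))) (μ k)) ∧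
    Tendsto (fun k => ∫ x, g (exp (-x)) ∂(μ k)) atTop (nhds (∫ t in (0:ℝ)..1, g t)) := by
  have hpi : ∀ (g : ℝ → ℝ), Continuous g → ∀ k, Integrable (fun x => g (exp (-x))) (μ k) := by
    intro p hp k
    obtain ⟨C, hC⟩ := (isCompact_Icc (a := (0:ℝ)) (b := 1)).exists_bound_of_continuousOn
      (f := p) hp.continuousOn
    refine (integrable_const C).mono' (hp.measurable.comp (by fun_prop)).aestronglyMeasurable ?_
    filter_upwards [hpos k] with x hx using hC _ (exp_Icc x hx)
  refine ⟨hpi g hg, ?_⟩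
  rw [Metric.tendsto_atTop]
  intro δ hδ
  obtain ⟨p, hp⟩ := exists_polynomial_near_of_continuousOn 0 1 g hg.continuousOn (δ / 4) (by positivity)
  obtain ⟨N, hN⟩ := Metric.tendsto_atTop.1 (poly_lim μ hmass hpos hΦ p) (δ / 4) (by positivity)
  refine ⟨N, fun k hk => ?_⟩
  have h1 := hN k hk
  have h2 : |∫ t in (0:ℝ)..1, (p.eval t - g t)| ≤ δ / 4 := by
    have := intervalIntegral.norm_integral_le_of_norm_le_const (a := 0) (b := 1) (C := δ / 4)
      (f := fun t => p.eval t - g t) (fun t ht => by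
        rw [uIoc_of_le zero_le_one] at ht
        exact (hp t ⟨ht.1.le, ht.2⟩).le)
    simpa using this
  rw [intervalIntegral.integral_sub (p.continuous.intervalIntegrable _ _) (hg.intervalIntegrable _ _)] at h2
  have h3 : |∫ x, (p.eval (exp (-x)) - g (exp (-x))) ∂(μ k)| ≤ δ / 4 := by
    have hm : (μ k).real univ ≤ 1 := by
      have := ENNReal.toReal_mono (by simp) (hmass k)
      simpa [Measure.real] using this
    have := norm_integral_le_of_norm_le_const (μ := μ k) (C := δ / 4)
      (f := fun x => p.eval (exp (-x)) - g (exp (-x))) (by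
        filter_upwards [hpos k] with x hx using (hp _ (exp_Icc x hx)).le)
    rw [Real.norm_eq_abs] at this
    nlinarith
  rw [integral_sub (hpi _ p.continuous k) (hpi _ hg k)] at h3
  rw [Real.dist_eq, abs_lt] at *
  rw [abs_le] at h2 h3
  constructor <;> linarith [h1.1, h1.2, h2.1, h2.2, h3.1, h3.2]

lemma tail_lim [∀ k, IsFiniteMeasure (μ k)] (hmass : ∀ k, (μ k) univ ≤ 1)
    (hpos : ∀ k, ∀ᵐ x ∂(μ k), 0 < x)
    (hΦ : ∀ q : ℝ, 0 < q → Tendsto (fun k => ∫ x, (1 - exp (-(q * x))) ∂(μ k)) atTop (nhds (q / (1 + q))))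
    (R : ℝ) (hR : 0 ≤ R) :
    Tendsto (fun k => (μ k).real (Ioi R)) atTop (nhds (exp (-R))) := by
  set s := exp (-R) with hs
  have s0 : 0 < s := Real.exp_pos _
  have s1 : s ≤ 1 := by rw [hs, Real.exp_le_one_iff]; linarith
  -- ramp functions
  let ramp : ℝ → ℝ → ℝ → ℝ := fun a δ t => max 0 (min 1 ((a - t) / δ))
  have hrc : ∀ a δ, Continuous (ramp a δ) := fun a δ => by
    simp only [ramp]; fun_prop
  have r0 : ∀ a δ t, 0 ≤ ramp a δ t := fun a δ t => le_max_left _ _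
  have r1 : ∀ a δ t, ramp a δ t ≤ 1 := fun a δ t => max_le zero_le_one (min_le_left _ _)
  have rone : ∀ a δ t, 0 < δ → t ≤ a - δ → ramp a δ t = 1 := fun a δ t hδ h => by
    have : 1 ≤ (a - t) / δ := by rw [le_div_iff₀ hδ]; linarith
    simp [ramp, this]
  have rzero : ∀ a δ t, 0 < δ → a ≤ t → ramp a δ t = 0 := fun a δ t hδ h => by
    have : (a - t) / δ ≤ 0 := div_nonpos_of_nonpos_of_nonneg (by linarith) hδ.le
    simp only [ramp]
    rw [max_eq_left]
    exact (min_le_right _ _).trans this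
  have hind : ∀ k, (μ k).real (Ioi R) = ∫ x, (Ioi R).indicator 1 x ∂(μ k) := fun k =>
    (integral_indicator_one measurableSet_Ioi).symm
  have hii : ∀ k, Integrable ((Ioi R).indicator (1 : ℝ → ℝ)) (μ k) := fun k =>
    (integrable_const (1:ℝ)).indicator measurableSet_Ioi
  rw [Metric.tendsto_atTop]
  intro η hη
  obtain ⟨δ, hδ, hδs, hδη⟩ : ∃ δ : ℝ, 0 < δ ∧ δ < s ∧ δ ≤ η / 2 :=
    ⟨min (s / 2) (η / 2), by positivity, (min_le_left _ _).trans_lt (by linarith), min_le_right _ _⟩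
  obtain ⟨iL, tL⟩ := cont_lim μ hmass hpos hΦ (ramp s δ) (hrc s δ)
  obtain ⟨iU, tU⟩ := cont_lim μ hmass hpos hΦ (ramp (s + δ) δ) (hrc (s + δ) δ)
  have bL : s - δ ≤ ∫ t in (0:ℝ)..1, ramp s δ t := by
    have e : ∫ t in (0:ℝ)..1, ramp s δ t = (∫ t in (0:ℝ)..(s - δ), ramp s δ t) + ∫ t in (s - δ)..1, ramp s δ t :=
      (intervalIntegral.integral_add_adjacent_intervals ((hrc _ _).intervalIntegrable _ _)
        ((hrc _ _).intervalIntegrable _ _)).symm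
    have e1 : ∫ t in (0:ℝ)..(s - δ), ramp s δ t = s - δ := by
      have : ∫ t in (0:ℝ)..(s - δ), ramp s δ t = ∫ t in (0:ℝ)..(s - δ), (1:ℝ) := by
        refine intervalIntegral.integral_congr fun t ht => ?_
        rw [uIcc_of_le (by linarith)] at ht
        exact rone _ _ _ hδ ht.2
      rw [this]; simp
    have e2 : 0 ≤ ∫ t in (s - δ)..1, ramp s δ t :=
      intervalIntegral.integral_nonneg (by linarith) fun t _ => r0 _ _ _
    linarith
  have bU : ∫ t in (0:ℝ)..1, ramp (s + δ) δ t ≤ s + δ := by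
    have hle : ∫ t in (0:ℝ)..1, ramp (s + δ) δ t ≤ ∫ t in (0:ℝ)..(1 + δ), ramp (s + δ) δ t := by
      rw [← intervalIntegral.integral_add_adjacent_intervals (a := 0) (b := 1) (c := 1 + δ)
        ((hrc _ _).intervalIntegrable _ _) ((hrc _ _).intervalIntegrable _ _)]
      have : 0 ≤ ∫ t in (1:ℝ)..(1 + δ), ramp (s + δ) δ t :=
        intervalIntegral.integral_nonneg (by linarith) fun t _ => r0 _ _ _
      linarith
    have e : ∫ t in (0:ℝ)..(1 + δ), ramp (s + δ) δ t = (∫ t in (0:ℝ)..(s + δ), ramp (s + δ) δ t) +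
        ∫ t in (s + δ)..(1 + δ), ramp (s + δ) δ t :=
      (intervalIntegral.integral_add_adjacent_intervals ((hrc _ _).intervalIntegrable _ _)
        ((hrc _ _).intervalIntegrable _ _)).symm
    have e1 : ∫ t in (s + δ)..(1 + δ), ramp (s + δ) δ t = 0 := by
      have : ∫ t in (s + δ)..(1 + δ), ramp (s + δ) δ t = ∫ t in (s + δ)..(1 + δ), (0:ℝ) := by
        refine intervalIntegral.integral_congr fun t ht => ?_
        rw [uIcc_of_le (by linarith)] at ht
        exact rzero _ _ _ hδ ht.1
      rw [this]; simp
    have e2 : ∫ t in (0:ℝ)..(s + δ), ramp (s + δ) δ t ≤ ∫ t in (0:ℝ)..(s + δ), (1:ℝ) :=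
      intervalIntegral.integral_mono_on (by linarith) ((hrc _ _).intervalIntegrable _ _)
        (by simp) fun t _ => r1 _ _ _
    simp at e2
    linarith
  obtain ⟨N1, h1⟩ := Metric.tendsto_atTop.1 tL (η / 2) (by positivity)
  obtain ⟨N2, h2⟩ := Metric.tendsto_atTop.1 tU (η / 2) (by positivity)
  refine ⟨max N1 N2, fun k hk => ?_⟩
  have a1 := h1 k ((le_max_left _ _).trans hk)
  have a2 := h2 k ((le_max_right _ _).trans hk)
  have c1 : ∫ x, ramp s δ (exp (-x)) ∂(μ k) ≤ (μ k).real (Ioi R) := by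
    rw [hind]
    refine integral_mono (iL k) (hii k) fun x => ?_
    by_cases hx : x ∈ Ioi R
    · rw [indicator_of_mem hx]; exact r1 _ _ _
    · rw [indicator_of_notMem hx]
      have hx : x ≤ R := not_lt.1 hx
      exact (rzero _ _ _ hδ (by rw [hs, Real.exp_le_exp]; linarith)).le
  have c2 : (μ k).real (Ioi R) ≤ ∫ x, ramp (s + δ) δ (exp (-x)) ∂(μ k) := by
    rw [hind]
    refine integral_mono (hii k) (iU k) fun x => ?_
    by_cases hx : x ∈ Ioi R
    · rw [indicator_of_mem hx]
      have hx : R < x := hx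
      refine (rone _ _ _ hδ ?_).ge
      have : exp (-x) ≤ s := by rw [hs, Real.exp_le_exp]; linarith
      linarith
    · rw [indicator_of_notMem hx]; exact r0 _ _ _
  rw [Real.dist_eq, abs_lt] at *
  constructor <;> linarith [a1.1, a1.2, a2.1, a2.2]

lemma tail_unif [∀ k, IsFiniteMeasure (μ k)]
    (hT : ∀ R : ℝ, 0 ≤ R → Tendsto (fun k => (μ k).real (Ioi R)) atTop (nhds (exp (-R))))
    (x : ℝ) (η : ℝ) (hη : 0 < η) :
    ∀ᶠ k in atTop, ∀ R ∈ Icc 0 x, |(μ k).real (Ioi R) - exp (-R)| < η := by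
  set δ := η / 2 with hδ
  have hδ0 : 0 < δ := by positivity
  obtain ⟨N, hN⟩ := exists_nat_gt (x / δ)
  have hev : ∀ᶠ k in atTop, ∀ i ∈ Finset.range (N + 2), |(μ k).real (Ioi (i * δ)) - exp (-(i * δ))| < δ := by
    rw [Finset.eventually_all]
    intro i _
    have := Metric.tendsto_nhds.1 (hT (i * δ) (by positivity)) δ hδ0
    simpa [Real.dist_eq] using this
  have lip : ∀ a b : ℝ, 0 ≤ a → a ≤ b → exp (-a) - exp (-b) ≤ b - a := by
    intro a b ha hab
    have h1 : exp (-b) = exp (-a) * exp (-(b - a)) := by rw [← Real.exp_add]; ring_nf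
    have h2 : exp (-a) ≤ 1 := by rw [Real.exp_le_one_iff]; linarith
    have h3 := one_sub_exp_nonneg (b - a) (by linarith)
    have h4 := one_sub_exp_le (b - a)
    have h5 := Real.exp_pos (-a)
    rw [h1]
    nlinarith
  filter_upwards [hev] with k hk R hR
  set i := ⌊R / δ⌋₊ with hi
  have hRδ : 0 ≤ R / δ := div_nonneg hR.1 hδ0.le
  have l1 : i * δ ≤ R := by
    have := Nat.floor_le hRδ
    rwa [le_div_iff₀ hδ0] at this
  have l2 : R < ((i + 1 : ℕ) : ℝ) * δ := by
    have := Nat.lt_floor_add_one (R / δ)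
    rw [div_lt_iff₀ hδ0] at this
    push_cast; exact this
  have hiN : i ≤ N := by
    have : (i:ℝ) < N := lt_of_le_of_lt ((Nat.floor_le hRδ).trans (by gcongr; exact hR.2)) hN
    exact_mod_cast this.le
  have k1 := abs_lt.1 (hk i (Finset.mem_range.2 (by omega)))
  have k2 := abs_lt.1 (hk (i + 1) (Finset.mem_range.2 (by omega)))
  have m1 : (μ k).real (Ioi R) ≤ (μ k).real (Ioi (i * δ)) := measureReal_mono (Ioi_subset_Ioi l1)
  have m2 : (μ k).real (Ioi (((i + 1 : ℕ) : ℝ) * δ)) ≤ (μ k).real (Ioi R) := measureReal_mono (Ioi_subset_Ioi l2.le)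
  have n1 := lip _ _ (by positivity : (0:ℝ) ≤ i * δ) l1
  have n2 := lip _ _ hR.1 l2.le
  push_cast at *
  rw [abs_lt]
  constructor <;> linarith [k1.1, k1.2, k2.1, k2.2]

end conv

theorem stmt5 (α : ℝ) (hα : α ∈ Ioo (0:ℝ) 1) (W : ℝ → ℝ → ℝ) (hW : GoodW α W)
    (x : ℝ) (hx : 0 < x)
    (ε : ℕ → ℝ) (hε : ∀ k, 0 < ε k) (hlim : Tendsto ε atTop (nhds 0))
    (φ : ℕ → ℝ → ℝ) (hφ : ∀ k, IsProfile (Kern (ε k) W) (φ k) ∧ IsNormalised (φ k)) :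
    TendstoUniformlyOn
      (fun k y => if y ≤ x then ∫ z in Ioo 0 (x - y), φ k z else 0)
      (fun y => if y ≤ x then 1 - exp (-(x - y)) else 0)
      atTop (Ici 0) ∧
    TendstoUniformlyOn
      (fun k y => ∫ z in Ioi (x - y), φ k z)
      (fun y => exp (-(x - y)))
      atTop (Icc 0 x) := by
  have hex := fun k => profile_measure α hα (ε k) (hε k) W hW (φ k) (hφ k).1 (hφ k).2
  choose μ hsf hpos hm1 hset hid using hex
  have hreal := fun k => real_identity (μ k) α hα (ε k) (hε k) W hW (hpos k) (hm1 k) (hid k)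
  have hmass : ∀ k, (μ k) univ ≤ 1 := fun k => (hreal k).1
  have hfin : ∀ k, IsFiniteMeasure (μ k) := fun k => ⟨(hmass k).trans_lt (by simp)⟩
  have hΦ : ∀ q : ℝ, 0 < q → Tendsto (fun k => ∫ x, (1 - exp (-(q * x))) ∂(μ k)) atTop
      (nhds (q / (1 + q))) := by
    intro q hq
    have hb := fun k => ode_bound (μ k) α hα (ε k) (hε k) (hpos k) (hm1 k) (hreal k).2 q hq
    have t1 : Tendsto (fun k => 2 * ε k * q ^ (1 - α) / (1 - α)) atTop (nhds 0) := by
      have := ((hlim.const_mul 2).mul_const (q ^ (1 - α))).div_const (1 - α)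
      simpa using this
    have t2 := squeeze_zero (fun k => sq_nonneg _) hb t1
    have t3 : Tendsto (fun k => 1 / (1 + q) - (∫ x, (1 - exp (-(q * x))) ∂(μ k)) / q) atTop (nhds 0) := by
      have h3 := t2.sqrt
      simp only [Real.sqrt_sq_eq_abs, Real.sqrt_zero] at h3
      exact (tendsto_zero_iff_abs_tendsto_zero _).2 h3
    have t4 := (t3.const_sub (1 / (1 + q))).mul_const q
    have e : (1 / (1 + q) - 0) * q = q / (1 + q) := by ring
    rw [e] at t4
    refine t4.congr fun k => ?_
    rw [sub_sub_cancel, div_mul_cancel₀ _ hq.ne']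
  have hT := tail_lim μ hmass hpos hΦ
  have hU := fun η hη => tail_unif μ hT x η hη
  have hm := mass_lim μ hmass hpos hΦ
  constructor
  · rw [Metric.tendstoUniformlyOn_iff]
    intro η hη
    filter_upwards [hU (η / 2) (by positivity), Metric.tendsto_nhds.1 hm (η / 2) (by positivity)]
      with k h1 h2 y hy
    have hy : 0 ≤ y := hy
    by_cases hyx : y ≤ x
    · simp only [hyx, if_true]
      rw [hset k _ measurableSet_Ioo (fun z hz => hz.1)]
      rcases hyx.eq_or_lt with rfl | hlt
      · simpa using hη
      have hR := h1 (x - y) ⟨by linarith, by linarith⟩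
      have hR0 : 0 < x - y := by linarith
      have hsplit : (μ k).real univ = (μ k).real (Iio (x - y)) + (μ k).real (Ici (x - y)) := by
        rw [← measureReal_add_measureReal_compl (s := Iio (x - y)) measurableSet_Iio, compl_Iio]
      have hsing : (μ k).real {x - y} = 0 := by
        have h := hset k {x - y} (measurableSet_singleton _)
          (fun z hz => by rw [mem_singleton_iff] at hz; rw [hz]; exact hR0)
        have h0 : ∫ z in {x - y}, φ k z = 0 := by
          rw [Measure.restrict_eq_zero.2 (by simp)]; simp
        rw [h0] at h
        exact h.symm
      have hIci : (μ k).real (Ici (x - y)) = (μ k).real (Ioi (x - y)) := by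
        have hun : Ici (x - y) = {x - y} ∪ Ioi (x - y) := by
          ext z; simp [le_iff_eq_or_lt, eq_comm]
        rw [hun, measureReal_union (by simp) measurableSet_Ioi, hsing, zero_add]
      have hIio : (μ k).real (Iio (x - y)) = ((μ k) (Ioo 0 (x - y))).toReal := by
        have : (μ k) (Iio (x - y)) = (μ k) (Ioo 0 (x - y)) := by
          apply measure_congr
          filter_upwards [hpos k] with z hz
          apply propext
          show z < x - y ↔ 0 < z ∧ z < x - y
          exact ⟨fun h => ⟨hz, h⟩, fun h => h.2⟩
        rw [Measure.real, this]
      rw [hIci, hIio] at hsplit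
      rw [Real.dist_eq, abs_lt] at h2 ⊢
      rw [abs_lt] at hR
      constructor <;> linarith [hR.1, hR.2, h2.1, h2.2]
    · simp only [hyx, if_false]
      simpa using hη
  · rw [Metric.tendstoUniformlyOn_iff]
    intro η hη
    filter_upwards [hU η hη] with k h1 y hy
    rw [hset k _ measurableSet_Ioi (fun z (hz : x - y < z) => (show (0:ℝ) < z by linarith [hy.2])), dist_comm, Real.dist_eq]
    exact h1 (x - y) ⟨by linarith [hy.2], by linarith [hy.1]⟩
end

section
/- Let α ∈ (0,1) and β ∈ (1+α, 2). There exists a constant C > 0 such that for all g, h ∈ X_{−α,β} the function B₂[g,h] defined by B₂[g,h](x) := (2/x²) ∫₀^x ∫_{x−y}^∞ y g(y) h(z) dz dy belongs to X_{−α,β} and satisfies ‖B₂[g,h]‖_{X_{−α,β}} ≤ C ‖g‖_{X_{−α,β}} ‖h‖_{X_{−α,β}}. -/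
open MeasureTheory Real Set Filter

noncomputable def B2 (g h : ℝ → ℝ) (x : ℝ) : ℝ :=
  (2 / x ^ 2) * ∫ y in Ioo 0 x, ∫ z in Ioi (x - y), y * g y * h z

theorem weight_meas (a b : ℝ) : Measurable (weight a b) := by
  unfold weight
  exact Measurable.ite measurableSet_Iic (by fun_prop) (by fun_prop)

theorem weight_one_le {α β x : ℝ} (hα : 0 < α) (hβ : 1 < β) (hx : 0 < x) :
    1 ≤ weight (-α) β x := by
  unfold weight
  split_ifs with h
  · exact Real.one_le_rpow_of_pos_of_le_one_of_nonpos hx h (by linarith)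
  · exact Real.one_le_rpow (by linarith) (by linarith)

theorem weight_self_le {α β x : ℝ} (hα : 0 < α) (hβ : 1 < β) (hx : 0 < x) :
    x ≤ weight (-α) β x := by
  by_cases h : x ≤ 1
  · exact h.trans (weight_one_le hα hβ hx)
  · unfold weight
    rw [if_neg h]
    exact Real.self_le_rpow_of_one_le (by linarith) hβ.le

theorem weight_kernel {α β x y : ℝ} (hα : 0 < α) (hβ : 1 < β) (hβ2 : β < 2) (hy : 0 < y)
    (hx : y < x) : weight (-α) β x ≤ weight (-α) β y + x ^ 2 := by
  have hw := weight_one_le hα hβ hy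
  by_cases h : x ≤ 1
  · have : weight (-α) β x ≤ weight (-α) β y := by
      unfold weight
      rw [if_pos h, if_pos (by linarith)]
      exact Real.rpow_le_rpow_of_nonpos hy hx.le (by linarith)
    nlinarith [sq_nonneg x]
  · have : weight (-α) β x ≤ x ^ 2 := by
      unfold weight
      rw [if_neg h, ← Real.rpow_natCast]
      exact Real.rpow_le_rpow_of_exponent_le (by linarith) (by norm_num; linarith)
    linarith

theorem kernel_bound {α β y z : ℝ} (hα : 0 < α) (hβ : 1 < β) (hβ2 : β < 2) (hy : 0 < y)
    (hz : 0 < z) :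
    ∫⁻ x in Ioo y (y + z), ENNReal.ofReal (2 / x ^ 2 * weight (-α) β x * y) ≤
      ENNReal.ofReal (4 * weight (-α) β y * weight (-α) β z) := by
  set w := weight (-α) β with hw
  have hwy := weight_one_le hα hβ hy
  have hwz := weight_one_le hα hβ hz
  have hyy := weight_self_le hα hβ hy
  have hzz := weight_self_le hα hβ hz
  rw [← hw] at hwy hwz hyy hzz
  have hyz : y ≤ y + z := by linarith
  have hderiv : ∀ x ∈ uIcc y (y + z),
      HasDerivAt (fun x : ℝ => 2 * y * (x - w y * x⁻¹)) (2 * y * (w y / x ^ 2 + 1)) x := by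
    intro x hx
    rw [uIcc_of_le hyz] at hx
    have hx0 : x ≠ 0 := by linarith [hx.1]
    have := ((hasDerivAt_id x).sub ((hasDerivAt_inv hx0).const_mul (w y))).const_mul (2 * y)
    refine this.congr_deriv ?_
    simp only [neg_div, div_eq_mul_inv]
    ring
  have hcont : ContinuousOn (fun x : ℝ => 2 * y * (w y / x ^ 2 + 1)) (uIcc y (y + z)) := by
    intro x hx
    rw [uIcc_of_le hyz] at hx
    have hx0 : x ^ 2 ≠ 0 := by have : x ≠ 0 := by linarith [hx.1]
                               positivity
    apply ContinuousAt.continuousWithinAt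
    fun_prop (disch := assumption)
  have hint := hcont.intervalIntegrable (μ := volume)
  have hval := intervalIntegral.integral_eq_sub_of_hasDerivAt hderiv hint
  rw [intervalIntegral.integral_of_le hyz] at hval
  rw [intervalIntegrable_iff_integrableOn_Ioc_of_le hyz] at hint
  calc _ ≤ ∫⁻ x in Ioo y (y + z), ENNReal.ofReal (2 * y * (w y / x ^ 2 + 1)) := by
        apply setLIntegral_mono' measurableSet_Ioo
        intro x hx
        apply ENNReal.ofReal_le_ofReal
        have hx0 : 0 < x := hy.trans hx.1
        have h1 := weight_kernel hα hβ hβ2 hy hx.1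
        rw [← hw] at h1
        have : 2 * y * (w y / x ^ 2 + 1) = 2 / x ^ 2 * (w y + x ^ 2) * y := by
          field_simp
        rw [this]
        gcongr
    _ ≤ ∫⁻ x in Ioc y (y + z), ENNReal.ofReal (2 * y * (w y / x ^ 2 + 1)) :=
        lintegral_mono_set Ioo_subset_Ioc_self
    _ = ENNReal.ofReal (∫ x in Ioc y (y + z), 2 * y * (w y / x ^ 2 + 1)) := by
        rw [ofReal_integral_eq_lintegral_ofReal hint]
        refine Eventually.of_forall fun x => ?_
        have : 0 < w y := by linarith
        show 0 ≤ 2 * y * (w y / x ^ 2 + 1)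
        positivity
    _ ≤ _ := by
        apply ENNReal.ofReal_le_ofReal
        rw [hval]
        have h1 : 0 ≤ y * (w y * (y + z)⁻¹) := by
          have : 0 < w y := by linarith
          positivity
        have h2 : y * (w y * y⁻¹) = w y := by field_simp
        have h3 : y * z ≤ w y * w z := by gcongr
        have h4 : w y ≤ w y * w z := by nlinarith
        nlinarith

theorem memX_meas {a b : ℝ} {g : ℝ → ℝ} (hg : MemX a b g) :
    AEStronglyMeasurable g (volume.restrict (Ioi 0)) := by
  have h1 := hg.aestronglyMeasurable.mul
    ((weight_meas a b).inv.aestronglyMeasurable (μ := volume.restrict (Ioi 0)))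
  refine h1.congr ?_
  filter_upwards [ae_restrict_mem measurableSet_Ioi] with x hx
  have hx : 0 < x := hx
  have : weight a b x ≠ 0 := by
    unfold weight
    split_ifs <;> positivity
  simp only [Pi.mul_apply, Pi.inv_apply]
  field_simp

noncomputable def F0 (g h : ℝ → ℝ) (x y z : ℝ) : ℝ :=
  if 0 < y ∧ y < x ∧ x - y < z then y * g y * h z else 0

theorem F0_meas {g h : ℝ → ℝ} (hg : Measurable g) (hh : Measurable h) :
    Measurable (fun p : ℝ × ℝ × ℝ => F0 g h p.1 p.2.1 p.2.2) := by
  unfold F0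
  refine Measurable.ite ?_ (by fun_prop) (by fun_prop)
  have a1 : MeasurableSet {p : ℝ × ℝ × ℝ | 0 < p.2.1} :=
    measurableSet_lt (by fun_prop) (by fun_prop)
  have a2 : MeasurableSet {p : ℝ × ℝ × ℝ | p.2.1 < p.1} :=
    measurableSet_lt (by fun_prop) (by fun_prop)
  have a3 : MeasurableSet {p : ℝ × ℝ × ℝ | p.1 - p.2.1 < p.2.2} :=
    measurableSet_lt (by fun_prop) (by fun_prop)
  exact a1.inter (a2.inter a3)

theorem B2_eq (g h : ℝ → ℝ) (x : ℝ) : B2 g h x = 2 / x ^ 2 * ∫ y, ∫ z, F0 g h x y z := by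
  unfold B2
  congr 1
  rw [← integral_indicator measurableSet_Ioo]
  congr 1
  ext y
  by_cases hy : y ∈ Ioo 0 x
  · rw [indicator_of_mem hy, ← integral_indicator measurableSet_Ioi]
    congr 1
    ext z
    simp [F0, indicator, hy.1, hy.2]
  · rw [indicator_of_notMem hy]
    have : ∀ z, F0 g h x y z = 0 := fun z => if_neg fun hc => hy ⟨hc.1, hc.2.1⟩
    simp [this]

theorem B2_congr {g h g' h' : ℝ → ℝ} (hg : g =ᵐ[volume.restrict (Ioi 0)] g')
    (hh : h =ᵐ[volume.restrict (Ioi 0)] h') : B2 g h = B2 g' h' := by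
  ext x
  rw [B2_eq, B2_eq]
  congr 1
  have hg := (ae_restrict_iff' measurableSet_Ioi).1 hg
  have hh := (ae_restrict_iff' measurableSet_Ioi).1 hh
  apply integral_congr_ae
  filter_upwards [hg] with y hy
  apply integral_congr_ae
  filter_upwards [hh] with z hz
  unfold F0
  split_ifs with hc
  · rw [hy hc.1, hz (show 0 < z by linarith)]
  · rfl

theorem B2_meas {g h : ℝ → ℝ} (hg : Measurable g) (hh : Measurable h) :
    StronglyMeasurable (B2 g h) := by
  have h0 : StronglyMeasurable (fun p : (ℝ × ℝ) × ℝ => F0 g h p.1.1 p.1.2 p.2) :=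
    ((F0_meas hg hh).comp (g := fun p : ℝ × ℝ × ℝ => F0 g h p.1 p.2.1 p.2.2)
      (f := fun p : (ℝ × ℝ) × ℝ => (p.1.1, p.1.2, p.2)) (by fun_prop)).stronglyMeasurable
  have h1 : StronglyMeasurable (fun p : ℝ × ℝ => ∫ z, F0 g h p.1 p.2 z) :=
    h0.integral_prod_right
  have h2 : StronglyMeasurable (fun x : ℝ => ∫ y, ∫ z, F0 g h x y z) :=
    h1.integral_prod_right
  have h3 : Measurable (B2 g h) := by
    have : B2 g h = fun x => 2 / x ^ 2 * ∫ y, ∫ z, F0 g h x y z := funext (B2_eq g h)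
    rw [this]
    exact Measurable.mul (by fun_prop) h2.measurable
  exact h3.stronglyMeasurable

theorem lint_bound {α β : ℝ} (hα : 0 < α) (hβ : 1 < β) (hβ2 : β < 2) {g h : ℝ → ℝ}
    (hg : Measurable g) (hh : Measurable h) :
    ∫⁻ x in Ioi 0, ‖B2 g h x * weight (-α) β x‖ₑ ≤
      4 * (∫⁻ x in Ioi 0, ‖g x * weight (-α) β x‖ₑ) *
        ∫⁻ x in Ioi 0, ‖h x * weight (-α) β x‖ₑ := by
  set w := weight (-α) β with hw
  have hwm : Measurable w := weight_meas _ _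
  let F : ℝ → ℝ → ℝ → ENNReal := fun x y z => ‖2 / x ^ 2 * w x * F0 g h x y z‖ₑ
  have hF : Measurable (fun p : ℝ × ℝ × ℝ => F p.1 p.2.1 p.2.2) := by
    have := F0_meas hg hh
    have h2 : Measurable (fun p : ℝ × ℝ × ℝ => 2 / p.1 ^ 2 * w p.1) := by fun_prop
    exact (h2.mul this).enorm
  have hF1 : Measurable (fun p : (ℝ × ℝ) × ℝ => F p.1.1 p.1.2 p.2) :=
    hF.comp (f := fun p : (ℝ × ℝ) × ℝ => (p.1.1, p.1.2, p.2)) (by fun_prop)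
  have hpt : ∀ x, ‖B2 g h x * w x‖ₑ ≤ ∫⁻ y, ∫⁻ z, F x y z := by
    intro x
    have : B2 g h x * w x = ∫ y, ∫ z, 2 / x ^ 2 * w x * F0 g h x y z := by
      simp_rw [integral_const_mul]
      rw [B2_eq]
      ring
    rw [this]
    refine (enorm_integral_le_lintegral_enorm _).trans (lintegral_mono fun y => ?_)
    exact enorm_integral_le_lintegral_enorm _
  have hin : ∀ y z, ∫⁻ x, F x y z ≤ (Ioi (0:ℝ)).indicator (fun y => 4 * ‖g y * w y‖ₑ) y *
      (Ioi (0:ℝ)).indicator (fun z => ‖h z * w z‖ₑ) z := by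
    intro y z
    by_cases hyz : 0 < y ∧ 0 < z
    · obtain ⟨hy, hz⟩ := hyz
      rw [indicator_of_mem (show y ∈ Ioi (0:ℝ) from hy),
        indicator_of_mem (show z ∈ Ioi (0:ℝ) from hz)]
      have e : ∀ x, F x y z = (Ioo y (y + z)).indicator
          (fun x => ENNReal.ofReal (2 / x ^ 2 * w x * y) * ‖g y * h z‖ₑ) x := by
        intro x
        by_cases hx : x ∈ Ioo y (y + z)
        · rw [indicator_of_mem hx]
          have hx0 : 0 < x := hy.trans hx.1
          have hwx : 1 ≤ w x := weight_one_le hα hβ hx0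
          have : 0 ≤ 2 / x ^ 2 * w x * y := by positivity
          rw [← Real.enorm_of_nonneg this, ← enorm_mul]
          simp only [F, F0]
          rw [if_pos ⟨hy, hx.1, by linarith [hx.2]⟩]
          congr 1
          ring
        · rw [indicator_of_notMem hx]
          simp only [F, F0]
          rw [if_neg]
          · simp
          · exact fun hc => hx ⟨hc.2.1, by linarith [hc.2.2]⟩
      simp_rw [e]
      rw [lintegral_indicator measurableSet_Ioo, lintegral_mul_const _ (by fun_prop)]
      refine (mul_le_mul_left (kernel_bound hα hβ hβ2 hy hz) _).trans (le_of_eq ?_)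
      rw [← hw]
      have hwy : 1 ≤ w y := weight_one_le hα hβ hy
      have hwz : 1 ≤ w z := weight_one_le hα hβ hz
      rw [← Real.enorm_of_nonneg (by positivity)]
      have h4 : (4 : ENNReal) = ‖(4:ℝ)‖ₑ := by
        rw [Real.enorm_of_nonneg (by norm_num)]; norm_num
      rw [h4]
      simp only [← enorm_mul]
      congr 1
      ring
    · have : ∀ x, F x y z = 0 := by
        intro x
        simp only [F, F0]
        rw [if_neg]
        · simp
        · exact fun hc => hyz ⟨hc.1, by linarith [hc.2.1, hc.2.2]⟩
      simp [this]
  calc _ ≤ ∫⁻ x, ‖B2 g h x * w x‖ₑ := setLIntegral_le_lintegral _ _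
    _ ≤ ∫⁻ x, ∫⁻ y, ∫⁻ z, F x y z := lintegral_mono hpt
    _ = ∫⁻ y, ∫⁻ x, ∫⁻ z, F x y z :=
        lintegral_lintegral_swap (Measurable.lintegral_prod_right'
          (f := fun p : (ℝ × ℝ) × ℝ => F p.1.1 p.1.2 p.2) hF1).aemeasurable
    _ = ∫⁻ y, ∫⁻ z, ∫⁻ x, F x y z := by
        refine lintegral_congr fun y => lintegral_lintegral_swap ?_
        exact (hF.comp (f := fun p : ℝ × ℝ => (p.1, y, p.2)) (by fun_prop)).aemeasurable
    _ ≤ ∫⁻ y, ∫⁻ z, (Ioi (0:ℝ)).indicator (fun y => 4 * ‖g y * w y‖ₑ) y *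
      (Ioi (0:ℝ)).indicator (fun z => ‖h z * w z‖ₑ) z :=
        lintegral_mono fun y => lintegral_mono fun z => hin y z
    _ = _ := by
        have m1 : Measurable (fun z => ‖h z * w z‖ₑ) := (hh.mul hwm).enorm
        have m2 : Measurable (fun z => ‖g z * w z‖ₑ) := (hg.mul hwm).enorm
        simp_rw [lintegral_const_mul _ (m1.indicator measurableSet_Ioi)]
        rw [lintegral_mul_const _ ((m2.const_mul 4).indicator measurableSet_Ioi),
          lintegral_indicator measurableSet_Ioi, lintegral_indicator measurableSet_Ioi,
          lintegral_const_mul _ m2]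

theorem Xnorm_eq {a b : ℝ} {g : ℝ → ℝ} (hg : MemX a b g) :
    Xnorm a b g = (∫⁻ x in Ioi 0, ‖g x * weight a b x‖ₑ).toReal := by
  rw [← integral_norm_eq_lintegral_enorm hg.aestronglyMeasurable]
  unfold Xnorm
  refine setIntegral_congr_fun measurableSet_Ioi fun x hx => ?_
  have hx : 0 < x := hx
  have : 0 ≤ weight a b x := by
    unfold weight
    split_ifs <;> positivity
  simp only [norm_mul, Real.norm_eq_abs]
  rw [abs_of_nonneg this]

theorem stmt8 (α β : ℝ) (hα : α ∈ Ioo (0:ℝ) 1) (hβ : β ∈ Ioo (1 + α) 2) :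
    ∃ C > (0:ℝ), ∀ g h : ℝ → ℝ, MemX (-α) β g → MemX (-α) β h →
      MemX (-α) β (B2 g h) ∧
      Xnorm (-α) β (B2 g h) ≤ C * Xnorm (-α) β g * Xnorm (-α) β h := by
  refine ⟨4, by norm_num, fun g h hg hh => ?_⟩
  have hα0 : 0 < α := hα.1
  have hβ1 : 1 < β := by linarith [hβ.1]
  obtain ⟨g', hg'm, hgg⟩ := memX_meas hg
  obtain ⟨h', hh'm, hhh⟩ := memX_meas hh
  have key := lint_bound hα0 hβ1 hβ.2 hg'm.measurable hh'm.measurable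
  rw [← B2_congr hgg hhh] at key
  have e1 : ∫⁻ x in Ioi 0, ‖g' x * weight (-α) β x‖ₑ =
      ∫⁻ x in Ioi 0, ‖g x * weight (-α) β x‖ₑ :=
    lintegral_congr_ae (by filter_upwards [hgg] with x hx; rw [hx])
  have e2 : ∫⁻ x in Ioi 0, ‖h' x * weight (-α) β x‖ₑ =
      ∫⁻ x in Ioi 0, ‖h x * weight (-α) β x‖ₑ :=
    lintegral_congr_ae (by filter_upwards [hhh] with x hx; rw [hx])
  rw [e1, e2] at key
  have f1 : ∫⁻ x in Ioi 0, ‖g x * weight (-α) β x‖ₑ < ⊤ := hg.hasFiniteIntegral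
  have f2 : ∫⁻ x in Ioi 0, ‖h x * weight (-α) β x‖ₑ < ⊤ := hh.hasFiniteIntegral
  have f3 := ENNReal.mul_lt_top (ENNReal.mul_lt_top (a := 4) (by norm_num) f1) f2
  have hB : MemX (-α) β (B2 g h) := by
    refine ⟨?_, key.trans_lt f3⟩
    rw [B2_congr hgg hhh]
    exact ((B2_meas hg'm.measurable hh'm.measurable).mul
      (weight_meas _ _).stronglyMeasurable).aestronglyMeasurable
  refine ⟨hB, ?_⟩
  rw [Xnorm_eq hB, Xnorm_eq hg, Xnorm_eq hh]
  have := ENNReal.toReal_mono f3.ne key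
  simpa [ENNReal.toReal_mul] using this
end
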